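/- arXiv:1904.07354 — 3 statements merged into one kernel-verified Lean document; each statement's English description precedes it below -/
import Mathlib

section
/- For every real α > 0 with α not an integer and every C₁ > 0, there exists a constant C₂ > 0 depending only on α and C₁ (in particular independent of L) with the following property: for every real L ≥ 1 and every smooth function f : ℝ × ℝ → ℝ that is 2π-periodic in its second variable and satisfies |f(s,θ)| ≤ C₁ (e^s + e^{-s})^α for all s ∈ [-L,L] and all θ, there exists a twice continuously differentiable function v : ℝ × ℝ → ℝ, 2π-periodic in its second variable, such that ∂²v/∂s² + ∂²v/∂θ² = f(s,θ) for all (s,θ) ∈ [-L,L] × ℝ, and |v(s,θ)| ≤ C₂ (e^s + e^{-s})^α for all (s,θ) ∈ [-L,L] × ℝ. -/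
open MeasureTheory Set Filter Topology

/-- the weight -/
noncomputable def cylW (α s : ℝ) : ℝ := (Real.exp s + Real.exp (-s)) ^ α

lemma cylW_pos (α s : ℝ) : 0 < cylW α s := Real.rpow_pos_of_pos (by positivity) _

lemma cylW_neg (α s : ℝ) : cylW α (-s) = cylW α s := by
  simp [cylW, add_comm]

lemma exp_le_cylW {α : ℝ} (hα : 0 < α) (s : ℝ) : Real.exp (α * s) ≤ cylW α s := by
  have : Real.exp (α * s) = Real.exp s ^ α := by rw [← Real.exp_mul, mul_comm]
  rw [this]
  exact Real.rpow_le_rpow (by positivity) (by linarith [Real.exp_pos (-s)]) hα.le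

lemma cylW_le_exp {α : ℝ} (hα : 0 < α) {s : ℝ} (hs : 0 ≤ s) :
    cylW α s ≤ 2 ^ α * Real.exp (α * s) := by
  have : Real.exp (α * s) = Real.exp s ^ α := by rw [← Real.exp_mul, mul_comm]
  rw [this, ← Real.mul_rpow (by positivity) (by positivity)]
  refine Real.rpow_le_rpow (by positivity) ?_ hα.le
  have : Real.exp (-s) ≤ Real.exp s := Real.exp_le_exp.mpr (by linarith)
  linarith

lemma cylW_shift {α : ℝ} (hα : 0 < α) {s t r : ℝ} (h : |s - t| ≤ r) :
    cylW α t ≤ cylW α s * Real.exp (α * r) := by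
  have : Real.exp (α * r) = Real.exp r ^ α := by rw [← Real.exp_mul, mul_comm]
  rw [this, cylW, cylW, ← Real.mul_rpow (by positivity) (by positivity)]
  refine Real.rpow_le_rpow (by positivity) ?_ hα.le
  obtain ⟨h1, h2⟩ := abs_le.mp h
  rw [add_mul, ← Real.exp_add, ← Real.exp_add]
  exact add_le_add (Real.exp_le_exp.mpr (by linarith)) (Real.exp_le_exp.mpr (by linarith))

lemma cylW_mono {α : ℝ} (hα : 0 < α) {s t : ℝ} (h : |s| ≤ |t|) : cylW α s ≤ cylW α t := by
  have := Real.cosh_le_cosh.mpr h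
  rw [Real.cosh_eq, Real.cosh_eq] at this
  exact Real.rpow_le_rpow (by positivity) (by linarith) hα.le

/-- low-mode first-order solution operator -/
noncomputable def lowP (c : ℝ) (g : ℝ → ℂ) (s : ℝ) : ℂ :=
  Real.exp (c * s) • ∫ t in (0:ℝ)..s, Real.exp (-(c * t)) • g t

lemma lowP_deriv (c : ℝ) {g : ℝ → ℂ} (hg : Continuous g) (s : ℝ) :
    HasDerivAt (lowP c g) (g s + c • lowP c g s) s := by
  have h1 : HasDerivAt (fun s => Real.exp (c * s)) (Real.exp (c * s) * c) s := by
    simpa using ((hasDerivAt_id s).const_mul c).exp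
  have hc : Continuous (fun t => Real.exp (-(c * t)) • g t) := by fun_prop
  have h2 := hc.integral_hasStrictDerivAt 0 s |>.hasDerivAt
  convert! h1.smul h2 using 1
  rw [smul_smul, ← Real.exp_add, lowP, smul_smul]
  simp [mul_comm]

lemma lowP_bound_pos {c α B : ℝ} (hc : c < α) {g : ℝ → ℂ}
    (hB : ∀ t, 0 ≤ t → ‖g t‖ ≤ B * Real.exp (α * t)) {s : ℝ} (hs : 0 ≤ s) :
    ‖lowP c g s‖ ≤ B / (α - c) * Real.exp (α * s) := by
  have hB0 : 0 ≤ B := by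
    have := (norm_nonneg _).trans (hB 0 le_rfl); simpa using this
  have hpos : 0 < α - c := by linarith
  have key : ‖∫ t in (0:ℝ)..s, Real.exp (-(c * t)) • g t‖
      ≤ ∫ t in (0:ℝ)..s, B * Real.exp ((α - c) * t) := by
    apply intervalIntegral.norm_integral_le_of_norm_le hs
    · refine Eventually.of_forall fun t ht => ?_
      rw [norm_smul, Real.norm_eq_abs, Real.abs_exp]
      calc _ ≤ Real.exp (-(c * t)) * (B * Real.exp (α * t)) := by
            gcongr; exact hB t ht.1.le
        _ = B * (Real.exp (-(c*t)) * Real.exp (α * t)) := by ring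
        _ = _ := by rw [← Real.exp_add]; ring_nf
    · exact (by fun_prop : Continuous fun t => B * Real.exp ((α - c) * t)).intervalIntegrable _ _
  have hnonint : ∫ t in (0:ℝ)..s, B * Real.exp ((α - c) * t)
      = B / (α - c) * (Real.exp ((α - c) * s) - 1) := by
    rw [intervalIntegral.integral_const_mul,
      intervalIntegral.integral_comp_mul_left (fun x => Real.exp x) hpos.ne']
    simp; field_simp
  rw [hnonint] at key
  rw [lowP, norm_smul, Real.norm_eq_abs, Real.abs_exp]
  calc _ ≤ Real.exp (c * s) * (B / (α - c) * Real.exp ((α - c) * s)) := by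
        gcongr
        refine key.trans ?_
        gcongr; linarith
    _ = B / (α - c) * (Real.exp (c * s) * Real.exp ((α - c) * s)) := by ring
    _ = _ := by rw [← Real.exp_add]; ring_nf

lemma lowP_neg (c : ℝ) (g : ℝ → ℂ) (s : ℝ) :
    lowP c g (-s) = lowP (-c) (fun t => -g (-t)) s := by
  have := intervalIntegral.integral_comp_neg (a := 0) (b := s)
    (fun t => Real.exp (-(c * t)) • g t)
  rw [lowP, lowP]
  congr 1
  · simp
  · rw [intervalIntegral.integral_symm, neg_zero.symm, ← this]
    simp

lemma lowP_bound {c α A : ℝ} (hα : 0 < α) (hc : |c| < α) {g : ℝ → ℂ}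
    (hA : ∀ t, ‖g t‖ ≤ A * cylW α t) (s : ℝ) :
    ‖lowP c g s‖ ≤ (A * 2 ^ α / (α - |c|)) * cylW α s := by
  have hA0 : 0 ≤ A := by
    by_contra h
    have := (norm_nonneg _).trans (hA 0)
    nlinarith [cylW_pos α 0]
  have main : ∀ (c : ℝ) (g : ℝ → ℂ) (s : ℝ), |c| < α → (∀ t, ‖g t‖ ≤ A * cylW α t) → 0 ≤ s →
      ‖lowP c g s‖ ≤ (A * 2 ^ α / (α - |c|)) * cylW α s := by
    intro c g s hc hg hs
    have := lowP_bound_pos (c := c) (α := α) (B := A * 2 ^ α) (g := g)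
      (lt_of_le_of_lt (le_abs_self c) hc) (fun t ht => (hg t).trans (by
        rw [mul_assoc]; gcongr; exact cylW_le_exp hα ht)) hs
    refine this.trans ?_
    have h1 : 0 < α - |c| := by linarith
    gcongr
    · exact le_abs_self c
    · exact exp_le_cylW hα s
  rcases le_total 0 s with hs | hs
  · exact main c g s hc hA hs
  · have := main (-c) (fun t => -g (-t)) (-s) (by simpa using hc)
      (fun t => by rw [norm_neg, ← cylW_neg α t]; exact hA _) (by linarith)
    rw [← lowP_neg, neg_neg, cylW_neg, abs_neg] at this
    exact this

/-- low modes -/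
lemma low_mode {c α : ℝ} (hα : 0 < α) (hc : |c| < α) {A : ℝ} {g : ℝ → ℂ} (hg : Continuous g)
    (hA : ∀ t, ‖g t‖ ≤ A * cylW α t) :
    ∃ u u' : ℝ → ℂ, (∀ s, HasDerivAt u (u' s) s) ∧
      (∀ s, HasDerivAt u' ((c:ℂ) ^ 2 * u s + g s) s) ∧
      ∀ s, ‖u s‖ ≤ (A * 2 ^ α / (α - |c|) * 2 ^ α / (α - |c|)) * cylW α s := by
  have d1 := lowP_deriv (-c) hg
  have hP : Continuous (lowP (-c) g) :=
    continuous_iff_continuousAt.mpr fun s => (d1 s).continuousAt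
  have d2 := lowP_deriv c hP
  refine ⟨lowP c (lowP (-c) g), fun s => lowP (-c) g s + c • lowP c (lowP (-c) g) s, d2, ?_, ?_⟩
  · intro s
    convert! (d1 s).add ((d2 s).const_smul c) using 1
    simp only [Complex.real_smul]
    push_cast
    ring
  · intro s
    refine lowP_bound hα hc (fun t => ?_) s
    have := lowP_bound (c := -c) hα (by simpa using hc) hA t
    simpa using this

/-- high-mode first-order solution operator -/
noncomputable def highP (N : ℝ) (g : ℝ → ℂ) (s : ℝ) : ℂ :=
  Real.exp (-(N * s)) • ∫ t in Iic s, Real.exp (N * t) • g t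

lemma highP_int {N M : ℝ} (hN : 0 < N) {g : ℝ → ℂ} (hg : Continuous g) (hM : ∀ t, ‖g t‖ ≤ M)
    (s : ℝ) : IntegrableOn (fun t => Real.exp (N * t) • g t) (Iic s) := by
  refine Integrable.mono' ((integrableOn_exp_mul_Iic hN s).mul_const M)
    (by fun_prop) (Eventually.of_forall fun t => ?_)
  rw [norm_smul, Real.norm_eq_abs, Real.abs_exp]
  gcongr
  exact hM t

lemma highP_deriv {N M : ℝ} (hN : 0 < N) {g : ℝ → ℂ} (hg : Continuous g) (hM : ∀ t, ‖g t‖ ≤ M)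
    (s : ℝ) : HasDerivAt (highP N g) (g s - N • highP N g s) s := by
  have h1 : HasDerivAt (fun s => Real.exp (-(N * s))) (Real.exp (-(N * s)) * (-N)) s := by
    simpa using ((hasDerivAt_id s).const_mul N).neg.exp
  have hc : Continuous (fun t => Real.exp (N * t) • g t) := by fun_prop
  have h2 : HasDerivAt (fun s => ∫ t in Iic s, Real.exp (N * t) • g t)
      (Real.exp (N * s) • g s) s := by
    have h3 := (hc.integral_hasStrictDerivAt 0 s |>.hasDerivAt).const_add
      (∫ t in Iic 0, Real.exp (N * t) • g t)
    refine h3.congr_of_eventuallyEq (Eventually.of_forall fun r => ?_)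
    have := intervalIntegral.integral_Iic_sub_Iic (highP_int hN hg hM 0) (highP_int hN hg hM r)
    simp only
    rw [← this]; ring
  convert! h1.smul h2 using 1
  rw [smul_smul, ← Real.exp_add, highP, smul_smul]
  simp only [neg_add_cancel, Real.exp_zero, one_smul, mul_neg, neg_smul, mul_comm N]
  ring

lemma highP_bound {N β A : ℝ} (hβ : β < N)
    {g : ℝ → ℂ} {s : ℝ} (hA : ∀ t, t ≤ s → ‖g t‖ ≤ A * Real.exp (β * (s - t))) :
    ‖highP N g s‖ ≤ A / (N - β) := by
  have hpos : 0 < N - β := by linarith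
  have key : ‖∫ t in Iic s, Real.exp (N * t) • g t‖
      ≤ ∫ t in Iic s, (A * Real.exp (β * s)) * Real.exp ((N - β) * t) := by
    refine norm_integral_le_of_norm_le ((integrableOn_exp_mul_Iic hpos s).const_mul _) ?_
    refine (ae_restrict_iff' measurableSet_Iic).mpr (Eventually.of_forall fun t ht => ?_)
    rw [norm_smul, Real.norm_eq_abs, Real.abs_exp]
    calc _ ≤ Real.exp (N * t) * (A * Real.exp (β * (s - t))) := by
          gcongr; exact hA t ht
      _ = A * (Real.exp (N*t) * Real.exp (β * (s - t))) := by ring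
      _ = A * (Real.exp (β * s) * Real.exp ((N - β) * t)) := by
          rw [← Real.exp_add, ← Real.exp_add]; ring_nf
      _ = _ := by ring
  rw [integral_const_mul, integral_exp_mul_Iic hpos] at key
  rw [highP, norm_smul, Real.norm_eq_abs, Real.abs_exp]
  calc _ ≤ Real.exp (-(N * s)) * (A * Real.exp (β * s) * (Real.exp ((N - β) * s) / (N - β))) := by
        gcongr
    _ = A / (N - β) * (Real.exp (-(N * s)) * Real.exp (β * s) * Real.exp ((N - β) * s)) := by ring
    _ = A / (N - β) * Real.exp 0 := by rw [← Real.exp_add, ← Real.exp_add]; ring_nf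
    _ = _ := by simp

/-- high modes -/
lemma high_mode {N α : ℝ} (hα : 0 < α) (hN : α < N) {A M : ℝ} {g : ℝ → ℂ} (hg : Continuous g)
    (hA : ∀ t, ‖g t‖ ≤ A * cylW α t) (hM : ∀ t, ‖g t‖ ≤ M) :
    ∃ u u' : ℝ → ℂ, (∀ s, HasDerivAt u (u' s) s) ∧
      (∀ s, HasDerivAt u' ((N:ℂ) ^ 2 * u s + g s) s) ∧
      (∀ s, ‖u s‖ ≤ (A / (N * (N - α))) * cylW α s) ∧
      (∀ s, ‖u s‖ ≤ M / N ^ 2) ∧ (∀ s, ‖u' s‖ ≤ M / N) ∧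
      (∀ s, ‖(N:ℂ) ^ 2 * u s + g s‖ ≤ 2 * M) := by
  have hN0 : 0 < N := hα.trans hN
  have hNc : (N:ℂ) ≠ 0 := by exact_mod_cast hN0.ne'
  have hM0 : 0 ≤ M := (norm_nonneg _).trans (hM 0)
  have hA0 : 0 ≤ A := by
    by_contra h
    have := (norm_nonneg _).trans (hA 0)
    nlinarith [cylW_pos α 0]
  set P := highP N g with hP
  set Q := fun s => highP N (fun t => g (-t)) (-s) with hQ
  have dP : ∀ s, HasDerivAt P (g s - N * P s) s := fun s => by
    simpa using highP_deriv hN0 hg hM s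
  have dQ : ∀ s, HasDerivAt Q (N * Q s - g s) s := fun s => by
    have h := highP_deriv hN0 (g := fun t => g (-t)) (by fun_prop) (fun t => hM _) (-s)
    have := h.scomp s (hasDerivAt_neg s)
    convert! this using 1
    simp [hQ]
  have bP : ∀ s, ‖P s‖ ≤ M / N := fun s => by
    simpa using highP_bound (N := N) (β := 0) hN0 (g := g) (s := s) (fun t _ => by simpa using hM t)
  have bQ : ∀ s, ‖Q s‖ ≤ M / N := fun s => by
    simpa using highP_bound (N := N) (β := 0) hN0 (g := fun t => g (-t)) (s := -s)
      (fun t _ => by simpa using hM (-t))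
  have wP : ∀ s, ‖P s‖ ≤ A * cylW α s / (N - α) := fun s => by
    refine highP_bound (N := N) (β := α) hN (fun t ht => ?_)
    rw [mul_assoc]
    refine (hA t).trans ?_
    gcongr
    exact cylW_shift hα (by rw [abs_of_nonneg]; linarith)
  have wQ : ∀ s, ‖Q s‖ ≤ A * cylW α s / (N - α) := fun s => by
    refine highP_bound (N := N) (β := α) hN (fun t ht => ?_)
    rw [mul_assoc]
    refine (hA _).trans ?_
    gcongr
    exact cylW_shift hα (by rw [abs_of_nonpos] <;> linarith)
  have nu : ∀ s X, ‖P s‖ ≤ X → ‖Q s‖ ≤ X → ‖-(P s + Q s) / (2 * N)‖ ≤ X / N := by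
    intro s X h1 h2
    rw [norm_div, norm_neg, norm_mul, Complex.norm_real, Real.norm_of_nonneg hN0.le]
    calc _ ≤ (X + X) / (2 * N) := by
          simp only [Complex.norm_ofNat]
          gcongr; exact (norm_add_le _ _).trans (add_le_add h1 h2)
      _ = _ := by field_simp; ring
  have b0 : ∀ s, ‖-(P s + Q s) / (2 * N)‖ ≤ M / N ^ 2 := fun s => by
    refine (nu s _ (bP s) (bQ s)).trans (le_of_eq ?_)
    field_simp
  refine ⟨fun s => -(P s + Q s) / (2 * N), fun s => (P s - Q s) / 2, ?_, ?_, ?_, b0, ?_, ?_⟩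
  · intro s
    convert! ((dP s).add (dQ s)).neg.div_const (2 * (N:ℂ)) using 1
    field_simp; ring
  · intro s
    convert! ((dP s).sub (dQ s)).div_const (2:ℂ) using 1
    field_simp; ring
  · intro s
    refine (nu s _ (wP s) (wQ s)).trans (le_of_eq ?_)
    have : N - α ≠ 0 := by linarith
    field_simp
  · intro s
    rw [norm_div]
    calc _ ≤ (M / N + M / N) / 2 := by
          simp only [Complex.norm_ofNat]
          gcongr; exact (norm_sub_le _ _).trans (add_le_add (bP s) (bQ s))
      _ = _ := by ring
  · intro s
    calc _ ≤ N ^ 2 * (M / N ^ 2) + M := by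
          refine (norm_add_le _ _).trans (add_le_add ?_ (hM s))
          rw [norm_mul, norm_pow, Complex.norm_real, Real.norm_of_nonneg hN0.le]
          gcongr
          exact b0 s
      _ = _ := by field_simp; ring

/-- the character -/
noncomputable def chr (n : ℤ) (θ : ℝ) : ℂ := Complex.exp (Complex.I * n * θ)

lemma norm_chr (n : ℤ) (θ : ℝ) : ‖chr n θ‖ = 1 := by
  rw [chr, Complex.norm_exp]; simp

lemma chr_deriv (n : ℤ) (θ : ℝ) : HasDerivAt (chr n) (Complex.I * n * chr n θ) θ := by
  have h : HasDerivAt (fun t : ℝ => Complex.I * n * (t:ℂ)) (Complex.I * n) θ := by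
    simpa using (Complex.ofRealCLM.hasDerivAt (x := θ)).const_mul (Complex.I * (n:ℂ))
  have := h.cexp
  convert! this using 1
  rw [chr, mul_comm]

lemma chr_contDiff (n : ℤ) : ContDiff ℝ 2 (chr n) := by
  have : ContDiff ℝ 2 (fun t : ℝ => (t:ℂ)) := Complex.ofRealCLM.contDiff
  unfold chr
  fun_prop

lemma chr_periodic (n : ℤ) (θ : ℝ) : chr n (θ + 2 * Real.pi) = chr n θ := by
  have := Complex.exp_periodic.int_mul n (Complex.I * n * θ)
  rw [chr, chr, ← this]
  congr 1
  push_cast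
  ring

lemma chr_iter (n : ℤ) (k : ℕ) : iteratedDeriv k (chr n) = fun θ => (Complex.I * n) ^ k * chr n θ := by
  induction k with
  | zero => ext; simp
  | succ k ih =>
    ext θ
    rw [iteratedDeriv_succ, ih]
    rw [((chr_deriv n θ).const_mul _).deriv]; ring

/-- solution predicate -/
def Sol (V H : ℝ × ℝ → ℂ) : Prop :=
  ContDiff ℝ 2 V ∧ (∀ s θ, V (s, θ + 2 * Real.pi) = V (s, θ)) ∧
  ∃ Vs Vss Vt Vtt : ℝ → ℝ → ℂ,
    (∀ s θ, HasDerivAt (fun x => V (x, θ)) (Vs s θ) s) ∧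
    (∀ s θ, HasDerivAt (fun x => Vs x θ) (Vss s θ) s) ∧
    (∀ s θ, HasDerivAt (fun x => V (s, x)) (Vt s θ) θ) ∧
    (∀ s θ, HasDerivAt (fun x => Vt s x) (Vtt s θ) θ) ∧
    ∀ s θ, Vss s θ + Vtt s θ = H (s, θ)

lemma Sol.add {V H V' H' : ℝ × ℝ → ℂ} (h : Sol V H) (h' : Sol V' H') :
    Sol (fun p => V p + V' p) (fun p => H p + H' p) := by
  obtain ⟨c, p, A, B, C, D, h1, h2, h3, h4, h5⟩ := h
  obtain ⟨c', p', A', B', C', D', h1', h2', h3', h4', h5'⟩ := h'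
  refine ⟨c.add c', fun s θ => by simp only [p, p'], fun s θ => A s θ + A' s θ,
    fun s θ => B s θ + B' s θ, fun s θ => C s θ + C' s θ, fun s θ => D s θ + D' s θ,
    fun s θ => (h1 s θ).add (h1' s θ), fun s θ => (h2 s θ).add (h2' s θ),
    fun s θ => (h3 s θ).add (h3' s θ), fun s θ => (h4 s θ).add (h4' s θ), fun s θ => ?_⟩
  simp only [← h5, ← h5']; ring

lemma contDiff_two_of {u u' u'' : ℝ → ℂ} (h1 : ∀ s, HasDerivAt u (u' s) s)
    (h2 : ∀ s, HasDerivAt u' (u'' s) s) (h3 : Continuous u'') : ContDiff ℝ 2 u := by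
  have e1 : deriv u = u' := funext fun s => (h1 s).deriv
  have e2 : deriv u' = u'' := funext fun s => (h2 s).deriv
  have : (2 : WithTop ℕ∞) = 1 + 1 := by norm_num
  rw [this, contDiff_succ_iff_deriv]
  refine ⟨fun s => (h1 s).differentiableAt, by simp, ?_⟩
  rw [e1, contDiff_one_iff_deriv, e2]
  exact ⟨fun s => (h2 s).differentiableAt, h3⟩

lemma Sol.term {n : ℤ} {u u' g : ℝ → ℂ} (hg : Continuous g) (h1 : ∀ s, HasDerivAt u (u' s) s)
    (h2 : ∀ s, HasDerivAt u' ((n:ℂ) ^ 2 * u s + g s) s) :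
    Sol (fun p => u p.1 * chr n p.2) (fun p => g p.1 * chr n p.2) := by
  have hu : Continuous u := continuous_iff_continuousAt.mpr fun s => (h1 s).continuousAt
  have c1 : ContDiff ℝ 2 u := contDiff_two_of h1 h2 (by fun_prop)
  refine ⟨?_, fun s θ => by simp only [chr_periodic], fun s θ => u' s * chr n θ,
    fun s θ => ((n:ℂ) ^ 2 * u s + g s) * chr n θ, fun s θ => u s * (Complex.I * n * chr n θ),
    fun s θ => u s * (Complex.I * n * (Complex.I * n * chr n θ)),
    fun s θ => (h1 s).mul_const (chr n θ), fun s θ => (h2 s).mul_const (chr n θ),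
    fun s θ => (chr_deriv n θ).const_mul (u s), fun s θ => ((chr_deriv n θ).const_mul _).const_mul (u s),
    fun s θ => ?_⟩
  · exact (c1.comp contDiff_fst).mul ((chr_contDiff n).comp contDiff_snd)
  · simp only
    linear_combination (u s * n ^ 2 * chr n θ) * Complex.I_sq

lemma Sol.sum {ι : Type*} (S : Finset ι) {V H : ι → ℝ × ℝ → ℂ} (h : ∀ i ∈ S, Sol (V i) (H i)) :
    Sol (fun p => ∑ i ∈ S, V i p) (fun p => ∑ i ∈ S, H i p) := by
  classical
  induction S using Finset.induction_on with
  | empty =>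
    simp only [Finset.sum_empty]
    exact ⟨contDiff_const, fun _ _ => rfl, fun _ _ => 0, fun _ _ => 0, fun _ _ => 0, fun _ _ => 0,
      fun _ _ => hasDerivAt_const _ _, fun _ _ => hasDerivAt_const _ _,
      fun _ _ => hasDerivAt_const _ _, fun _ _ => hasDerivAt_const _ _, fun _ _ => by simp⟩
  | insert a s ha ih =>
    simp only [Finset.sum_insert ha]
    exact (h a (Finset.mem_insert_self _ _)).add (ih fun i hi => h i (Finset.mem_insert_of_mem hi))

lemma norm_iter_comp {u : ℝ → ℂ} (hu : ContDiff ℝ 2 u) (L : ℝ × ℝ →L[ℝ] ℝ) (hL : ‖L‖ ≤ 1)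
    {i : ℕ} (hi : i ≤ 2) (p : ℝ × ℝ) :
    ‖iteratedFDeriv ℝ i (fun q => u (L q)) p‖ ≤ ‖iteratedDeriv i u (L p)‖ := by
  have := L.iteratedFDeriv_comp_right hu p (i := i) (by exact_mod_cast hi)
  change ‖iteratedFDeriv ℝ i (u ∘ L) p‖ ≤ _
  rw [this, ← norm_iteratedFDeriv_eq_norm_iteratedDeriv]
  refine (ContinuousMultilinearMap.norm_compContinuousLinearMap_le _ _).trans ?_
  refine mul_le_of_le_one_right (norm_nonneg _) ?_
  exact Finset.prod_le_one (fun _ _ => norm_nonneg _) (fun _ _ => hL)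

lemma term_iter_bound {n : ℤ} {u u' u'' : ℝ → ℂ} (h1 : ∀ s, HasDerivAt u (u' s) s)
    (h2 : ∀ s, HasDerivAt u' (u'' s) s) (h3 : Continuous u'') {B : ℝ}
    (b0 : ∀ s, ‖u s‖ ≤ B) (b1 : ∀ s, ‖u' s‖ ≤ B * |(n:ℝ)|) (b2 : ∀ s, ‖u'' s‖ ≤ B * |(n:ℝ)| ^ 2)
    {k : ℕ} (hk : k ≤ 2) (p : ℝ × ℝ) :
    ‖iteratedFDeriv ℝ k (fun p : ℝ × ℝ => u p.1 * chr n p.2) p‖ ≤ 2 ^ k * (B * |(n:ℝ)| ^ k) := by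
  have cu := contDiff_two_of h1 h2 h3
  have e1 : deriv u = u' := funext fun s => (h1 s).deriv
  have e2 : deriv u' = u'' := funext fun s => (h2 s).deriv
  have bu : ∀ i ≤ 2, ∀ s, ‖iteratedDeriv i u s‖ ≤ B * |(n:ℝ)| ^ i := by
    intro i hi s
    interval_cases i
    · simpa using b0 s
    · simpa [iteratedDeriv_one, e1] using b1 s
    · rw [iteratedDeriv_succ, iteratedDeriv_one, e1, e2]; exact b2 s
  have bc : ∀ i s, ‖iteratedDeriv i (chr n) s‖ ≤ |(n:ℝ)| ^ i := by
    intro i s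
    rw [chr_iter]
    simp [norm_chr]
  have hB : 0 ≤ B := (norm_nonneg _).trans (b0 0)
  refine (norm_iteratedFDeriv_mul_le (N := 2) (cu.comp contDiff_fst)
    ((chr_contDiff n).comp contDiff_snd) p (n := k) (by exact_mod_cast hk)).trans ?_
  have : (2:ℝ) ^ k = ∑ i ∈ Finset.range (k + 1), (k.choose i : ℝ) := by
    exact_mod_cast (Nat.sum_range_choose k).symm
  rw [this, Finset.sum_mul]
  refine Finset.sum_le_sum fun i hi => ?_
  have hik : i ≤ k := by simpa [Nat.lt_succ_iff] using hi
  have q1 := (norm_iter_comp cu (ContinuousLinearMap.fst ℝ ℝ ℝ)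
    (ContinuousLinearMap.norm_fst_le ..) (hik.trans hk) p).trans (bu i (hik.trans hk) _)
  have q2 := (norm_iter_comp (chr_contDiff n) (ContinuousLinearMap.snd ℝ ℝ ℝ)
    (ContinuousLinearMap.norm_snd_le ..) ((Nat.sub_le k i).trans hk) p).trans (bc (k - i) _)
  rw [mul_assoc]
  refine mul_le_mul_of_nonneg_left ?_ (by positivity)
  calc _ ≤ (B * |(n:ℝ)| ^ i) * |(n:ℝ)| ^ (k - i) :=
        mul_le_mul q1 q2 (norm_nonneg _) (by positivity)
    _ = _ := by rw [mul_assoc, ← pow_add, Nat.add_sub_cancel' hik]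

lemma Sol.tsum {u u' g : ℤ → ℝ → ℂ} (hg : ∀ n, Continuous (g n))
    (h1 : ∀ n s, HasDerivAt (u n) (u' n s) s)
    (h2 : ∀ (n : ℤ) s, HasDerivAt (u' n) ((n:ℂ) ^ 2 * u n s + g n s) s)
    {B : ℤ → ℝ} (b0 : ∀ n s, ‖u n s‖ ≤ B n) (b1 : ∀ n s, ‖u' n s‖ ≤ B n * |(n:ℝ)|)
    (b2 : ∀ (n : ℤ) s, ‖(n:ℂ) ^ 2 * u n s + g n s‖ ≤ B n * |(n:ℝ)| ^ 2)
    (hB : ∀ k ≤ 2, Summable fun n : ℤ => B n * |(n:ℝ)| ^ k) :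
    Sol (fun p => ∑' n, u n p.1 * chr n p.2) (fun p => ∑' n, g n p.1 * chr n p.2) := by
  have hu : ∀ n, Continuous (u n) :=
    fun n => continuous_iff_continuousAt.mpr fun s => (h1 n s).continuousAt
  have hc : ∀ n : ℤ, Continuous fun s => (n:ℂ) ^ 2 * u n s + g n s := fun n => by
    have := hg n; have := hu n; fun_prop
  have sB0 : Summable B := by simpa using hB 0 (by norm_num)
  have sB1 : Summable fun n : ℤ => B n * |(n:ℝ)| := by simpa using hB 1 (by norm_num)
  have sB2 := hB 2 le_rfl
  have t0 : ∀ n s θ, ‖u n s * chr n θ‖ ≤ B n := fun n s θ => by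
    rw [norm_mul, norm_chr, mul_one]; exact b0 n s
  have t1 : ∀ n s θ, ‖u' n s * chr n θ‖ ≤ B n * |(n:ℝ)| := fun n s θ => by
    rw [norm_mul, norm_chr, mul_one]; exact b1 n s
  have t2 : ∀ (n : ℤ) s θ, ‖((n:ℂ) ^ 2 * u n s + g n s) * chr n θ‖ ≤ B n * |(n:ℝ)| ^ 2 := fun n s θ => by
    rw [norm_mul, norm_chr, mul_one]; exact b2 n s
  have r1 : ∀ (n : ℤ) s θ, ‖u n s * (Complex.I * n * chr n θ)‖ ≤ B n * |(n:ℝ)| := fun n s θ => by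
    simp only [norm_mul, norm_chr, mul_one, Complex.norm_I, one_mul, Complex.norm_intCast]
    gcongr; exact b0 n s
  have r2 : ∀ (n : ℤ) s θ, ‖u n s * (Complex.I * n * (Complex.I * n * chr n θ))‖
      ≤ B n * |(n:ℝ)| ^ 2 := fun n s θ => by
    simp only [norm_mul, norm_chr, mul_one, Complex.norm_I, one_mul, Complex.norm_intCast]
    rw [← sq]
    gcongr; exact b0 n s
  refine ⟨?_, fun s θ => by simp only [chr_periodic],
    fun s θ => ∑' n, u' n s * chr n θ, fun s θ => ∑' n : ℤ, ((n:ℂ) ^ 2 * u n s + g n s) * chr n θ,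
    fun s θ => ∑' n : ℤ, u n s * (Complex.I * n * chr n θ),
    fun s θ => ∑' n : ℤ, u n s * (Complex.I * n * (Complex.I * n * chr n θ)), ?_, ?_, ?_, ?_, ?_⟩
  · refine contDiff_tsum (N := (2 : ℕ∞)) (v := fun k n => 2 ^ k * (B n * |(n:ℝ)| ^ k)) (fun n => ?_)
      (fun k hk => (hB k (by exact_mod_cast hk)).mul_left _) (fun k n p hk => ?_)
    · exact ((contDiff_two_of (h1 n) (h2 n) (hc n)).comp contDiff_fst).mul
        ((chr_contDiff n).comp contDiff_snd)
    · exact term_iter_bound (h1 n) (h2 n) (hc n) (b0 n) (b1 n) (b2 n) (by exact_mod_cast hk) p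
  · intro s θ
    exact hasDerivAt_tsum sB1 (fun n y => (h1 n y).mul_const (chr n θ)) (fun n y => t1 n y θ)
      (Summable.of_norm_bounded sB0 (fun n => t0 n 0 θ)) s
  · intro s θ
    exact hasDerivAt_tsum sB2 (fun n y => (h2 n y).mul_const (chr n θ)) (fun n y => t2 n y θ)
      (Summable.of_norm_bounded sB1 (fun n => t1 n 0 θ)) s
  · intro s θ
    exact hasDerivAt_tsum sB1 (fun n y => (chr_deriv n y).const_mul (u n s)) (fun n y => r1 n s y)
      (Summable.of_norm_bounded sB0 (fun n => t0 n s 0)) θ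
  · intro s θ
    exact hasDerivAt_tsum sB2
      (fun n y => ((chr_deriv n y).const_mul (Complex.I * n)).const_mul (u n s))
      (fun n y => r2 n s y)
      (Summable.of_norm_bounded sB1 (fun n => r1 n s 0)) θ
  · intro s θ
    rw [← Summable.tsum_add (Summable.of_norm_bounded sB2 (fun n => t2 n s θ))
      (Summable.of_norm_bounded sB2 (fun n => r2 n s θ))]
    refine tsum_congr fun n => ?_
    linear_combination (u n s * n ^ 2 * chr n θ) * Complex.I_sq

/-- Fourier coefficient -/
noncomputable def fc (φ : ℝ → ℂ) (n : ℤ) : ℂ :=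
  (1 / (2 * Real.pi)) • ∫ t in (0:ℝ)..(2 * Real.pi), chr (-n) t * φ t

lemma fc_bound {φ : ℝ → ℂ} {K : ℝ} (hK : ∀ t ∈ Icc 0 (2 * Real.pi), ‖φ t‖ ≤ K) (n : ℤ) :
    ‖fc φ n‖ ≤ K := by
  have hpi := Real.two_pi_pos
  have := intervalIntegral.norm_integral_le_of_norm_le_const (a := 0) (b := 2 * Real.pi)
    (f := fun t => chr (-n) t * φ t) (C := K) (fun t ht => by
      rw [uIoc_of_le hpi.le] at ht
      rw [norm_mul, norm_chr, one_mul]; exact hK t ⟨ht.1.le, ht.2⟩)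
  rw [fc, norm_smul, Real.norm_of_nonneg (by positivity)]
  rw [sub_zero, abs_of_pos hpi] at this
  calc _ ≤ 1 / (2 * Real.pi) * (K * (2 * Real.pi)) := by gcongr
    _ = K := by field_simp

lemma fc_deriv {φ φ' : ℝ → ℂ} (h : ∀ t, HasDerivAt φ (φ' t) t) (h' : Continuous φ')
    (hp : φ (2 * Real.pi) = φ 0) (n : ℤ) : fc φ' n = Complex.I * n * fc φ n := by
  have hc : Continuous (chr (-n)) := (chr_contDiff (-n)).continuous
  have hφ : Continuous φ := continuous_iff_continuousAt.mpr fun s => (h s).continuousAt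
  have := intervalIntegral.integral_mul_deriv_eq_deriv_mul (a := 0) (b := 2 * Real.pi)
    (fun x _ => chr_deriv (-n) x) (fun x _ => h x)
    ((by fun_prop : Continuous fun x => Complex.I * ((-n : ℤ) : ℂ) * chr (-n) x).intervalIntegrable _ _)
    (h'.intervalIntegrable _ _)
  have e : chr (-n) (2 * Real.pi) = chr (-n) 0 := by simpa using chr_periodic (-n) 0
  rw [e, hp, sub_self, zero_sub] at this
  rw [fc, fc, this, ← intervalIntegral.integral_neg, mul_smul_comm,
    ← intervalIntegral.integral_const_mul]
  congr 2
  ext t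
  push_cast
  ring

lemma fc_hasSum {φ : ℝ → ℂ} (hφ : Continuous φ) (hp : Function.Periodic φ (2 * Real.pi))
    (hs : Summable (fc φ)) (θ : ℝ) : HasSum (fun n => fc φ n * chr n θ) (φ θ) := by
  have : Fact (0 < 2 * Real.pi) := ⟨Real.two_pi_pos⟩
  have hcont : Continuous (hp.lift : AddCircle (2 * Real.pi) → ℂ) :=
    continuous_coinduced_dom.mpr hφ
  let F : C(AddCircle (2 * Real.pi), ℂ) := ⟨hp.lift, hcont⟩
  have ec : ∀ (n : ℤ) (x : ℝ), fourier n (x : AddCircle (2 * Real.pi)) = chr n x := by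
    intro n x
    rw [fourier_coe_apply, chr]
    congr 1
    have : (Real.pi : ℂ) ≠ 0 := by exact_mod_cast Real.pi_ne_zero
    push_cast
    field_simp
  have e : fourierCoeff F = fc φ := by
    ext n
    rw [fourierCoeff_eq_intervalIntegral _ _ 0, fc, zero_add]
    congr 1
    refine intervalIntegral.integral_congr fun x _ => ?_
    simp only [smul_eq_mul, ec]
    rfl
  have := has_pointwise_sum_fourier_series_of_summable (f := F) (by rw [e]; exact hs) (θ : AddCircle (2 * Real.pi))
  simp only [e, ec, smul_eq_mul] at this
  exact this

lemma partial_contDiff {F : ℝ × ℝ → ℂ} (hF : ContDiff ℝ (⊤ : ℕ∞) F) :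
    ∃ G : ℝ × ℝ → ℂ, ContDiff ℝ (⊤ : ℕ∞) G ∧
      ∀ s θ, HasDerivAt (fun t => F (s, t)) (G (s, θ)) θ := by
  refine ⟨fun p => fderiv ℝ F p (0, 1), ?_, fun s θ => ?_⟩
  · exact (hF.fderiv_right (m := (⊤ : ℕ∞)) (by simp)).clm_apply contDiff_const
  · have h := (hF.differentiable (by simp) (s, θ)).hasFDerivAt
    exact h.comp_hasDerivAt θ ((hasDerivAt_const θ s).prodMk (hasDerivAt_id θ))

lemma Sol.real {V H : ℝ × ℝ → ℂ} (h : Sol V H) :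
    ContDiff ℝ 2 (fun p => (V p).re) ∧
    (∀ s θ : ℝ, (V (s, θ + 2 * Real.pi)).re = (V (s, θ)).re) ∧
    ∀ s θ : ℝ, deriv (fun s' => deriv (fun s'' => (V (s'', θ)).re) s') s +
      deriv (fun θ' => deriv (fun θ'' => (V (s, θ'')).re) θ') θ = (H (s, θ)).re := by
  obtain ⟨c, p, A, B, C, D, h1, h2, h3, h4, h5⟩ := h
  have re : ∀ {w : ℝ → ℂ} {w' : ℂ} {x : ℝ}, HasDerivAt w w' x →
      HasDerivAt (fun y => (w y).re) w'.re x := fun h =>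
    Complex.reCLM.hasFDerivAt.comp_hasDerivAt _ h
  refine ⟨Complex.reCLM.contDiff.comp c, fun s θ => by rw [p], fun s θ => ?_⟩
  have e1 : (fun s' => deriv (fun s'' => (V (s'', θ)).re) s') = fun s' => (A s' θ).re :=
    funext fun s' => (re (h1 s' θ)).deriv
  have e2 : (fun θ' => deriv (fun θ'' => (V (s, θ'')).re) θ') = fun θ' => (C s θ').re :=
    funext fun θ' => (re (h3 s θ')).deriv
  rw [e1, e2, (re (h2 s θ)).deriv, (re (h4 s θ)).deriv, ← h5, Complex.add_re]

/-- low mode index set -/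
lemma exists_lowset (α : ℝ) : ∃ S : Finset ℤ, ∀ n : ℤ, n ∈ S ↔ |(n:ℝ)| < α := by
  refine ⟨(Finset.Icc (-⌈α⌉) ⌈α⌉).filter fun n => |(n:ℝ)| < α, fun n => ?_⟩
  simp only [Finset.mem_filter, Finset.mem_Icc, and_iff_right_iff_imp]
  intro h
  obtain ⟨h1, h2⟩ := abs_lt.mp h
  have := Int.le_ceil α
  constructor
  · have : (-(⌈α⌉:ℝ)) ≤ n := by linarith
    exact_mod_cast this
  · have : (n:ℝ) ≤ ⌈α⌉ := by linarith
    exact_mod_cast this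

lemma cyl_main {α C₁ : ℝ} (hα : 0 < α) (S : Finset ℤ) (hS : ∀ n : ℤ, n ∈ S ↔ |(n:ℝ)| < α)
    (hS' : ∀ n : ℤ, n ∉ S → α < |(n:ℝ)|)
    {D : ℤ → ℝ} (hD : Summable D) (hD0 : ∀ n, 0 ≤ D n)
    (hDb : ∀ n : ℤ, n ∉ S → C₁ / (|(n:ℝ)| * (|(n:ℝ)| - α)) ≤ D n)
    {g : ℤ → ℝ → ℂ} (hg : ∀ n, Continuous (g n)) (hA : ∀ n t, ‖g n t‖ ≤ C₁ * cylW α t)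
    {K : ℝ} (hK : ∀ n : ℤ, n ≠ 0 → ∀ t, ‖g n t‖ ≤ K / (n:ℝ) ^ 2) :
    ∃ V H : ℝ × ℝ → ℂ, Sol V H ∧
      (∀ s θ, ∀ y, HasSum (fun n => g n s * chr n θ) y → H (s, θ) = y) ∧
      ∀ s θ, ‖V (s, θ)‖ ≤ ((∑ n ∈ S, (C₁ * 2 ^ α / (α - |(n:ℝ)|) * 2 ^ α / (α - |(n:ℝ)|)))
        + ∑' n, D n) * cylW α s := by
  have hK0 : 0 ≤ K := by
    have := (norm_nonneg _).trans (hK 1 one_ne_zero 0); simpa using this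
  -- low part
  have low : ∀ n : ℤ, ∃ u u' : ℝ → ℂ, n ∈ S → ((∀ s, HasDerivAt u (u' s) s) ∧
      (∀ s, HasDerivAt u' ((n:ℂ) ^ 2 * u s + g n s) s) ∧
      ∀ s, ‖u s‖ ≤ (C₁ * 2 ^ α / (α - |(n:ℝ)|) * 2 ^ α / (α - |(n:ℝ)|)) * cylW α s) := by
    intro n
    by_cases hn : n ∈ S
    · obtain ⟨u, u', h1, h2, h3⟩ := low_mode hα ((hS n).mp hn) (hg n) (hA n)
      exact ⟨u, u', fun _ => ⟨h1, by simpa using h2, h3⟩⟩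
    · exact ⟨0, 0, fun h => absurd h hn⟩
  choose a a' ha using low
  have high : ∀ n : ℤ, ∃ u u' : ℝ → ℂ, (∀ s, HasDerivAt u (u' s) s) ∧
      (∀ s, HasDerivAt u' ((n:ℂ) ^ 2 * u s + (if n ∈ S then 0 else g n s)) s) ∧
      (∀ s, ‖u s‖ ≤ D n * cylW α s) ∧
      (∀ s, ‖u s‖ ≤ 2 * K / (n:ℝ) ^ 4) ∧ (∀ s, ‖u' s‖ ≤ 2 * K / (n:ℝ) ^ 4 * |(n:ℝ)|) ∧
      (∀ s, ‖(n:ℂ) ^ 2 * u s + (if n ∈ S then 0 else g n s)‖ ≤ 2 * K / (n:ℝ) ^ 4 * |(n:ℝ)| ^ 2) := by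
    intro n
    have p4 : 0 ≤ 2 * K / (n:ℝ) ^ 4 := by positivity
    by_cases hn : n ∈ S
    · refine ⟨fun _ => 0, fun _ => 0, fun s => hasDerivAt_const _ _, fun s => ?_, fun s => ?_,
        fun s => ?_, fun s => ?_, fun s => ?_⟩
      · simpa [hn] using hasDerivAt_const s (0:ℂ)
      · simpa using mul_nonneg (hD0 n) (cylW_pos α s).le
      · simpa using p4
      · simpa using mul_nonneg p4 (abs_nonneg _)
      · simpa [hn] using mul_nonneg p4 (sq_nonneg (n:ℝ))
    · have hN := hS' n hn
      have hN0 : 0 < |(n:ℝ)| := hα.trans hN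
      have hn0 : n ≠ 0 := by rintro rfl; simp at hN0
      obtain ⟨u, u', h1, h2, h3, h4, h5, h6⟩ := high_mode hα hN (hg n) (hA n) (hK n hn0)
      have sqe : ((|(n:ℝ)| : ℝ) : ℂ) ^ 2 = (n:ℂ) ^ 2 := by
        rw [← Complex.ofReal_pow, sq_abs]; push_cast; rfl
      have e4 : (n:ℝ) ^ 4 = |(n:ℝ)| ^ 4 := by
        rw [← abs_pow, abs_of_nonneg]; positivity
      rw [sqe] at h2 h6
      simp only [hn, if_false]
      rw [← sq_abs (n:ℝ)] at h4 h5 h6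
      rw [e4]
      clear sqe e4 p4
      have hDn := hDb n hn
      generalize |(n:ℝ)| = N at hN hN0 h3 h4 h5 h6 hDn ⊢
      refine ⟨u, u', h1, h2, fun s => (h3 s).trans ?_, fun s => (h4 s).trans ?_,
        fun s => (h5 s).trans ?_, fun s => (h6 s).trans (le_of_eq ?_)⟩
      · exact mul_le_mul_of_nonneg_right hDn (cylW_pos α s).le
      · rw [div_div, ← pow_add]
        norm_num
        gcongr
        linarith
      · have : 2 * K / N ^ 4 * N = 2 * K / (N ^ 2 * N) := by field_simp
        rw [this, div_div]
        gcongr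
        linarith
      · field_simp
  choose b b' hb1 hb2 hbw hb3 hb4 hb5 using high
  have s2 : Summable fun n : ℤ => 2 * K * (1 / (n:ℝ) ^ 2) :=
    (Real.summable_one_div_int_pow.mpr (by norm_num)).mul_left _
  have sB : ∀ k ≤ 2, Summable fun n : ℤ => 2 * K / (n:ℝ) ^ 4 * |(n:ℝ)| ^ k := by
    intro k hk
    refine Summable.of_nonneg_of_le (fun n => by positivity) (fun n => ?_) s2
    rcases eq_or_ne n 0 with rfl | hn
    · simp
    · have h1 : 1 ≤ |(n:ℝ)| := by exact_mod_cast Int.one_le_abs hn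
      have hn' : (n:ℝ) ≠ 0 := by exact_mod_cast hn
      calc _ ≤ 2 * K / (n:ℝ) ^ 4 * |(n:ℝ)| ^ 2 := by gcongr
        _ = _ := by rw [sq_abs]; field_simp
  have solH := Sol.tsum (u := b) (u' := b') (g := fun n s => if n ∈ S then 0 else g n s)
    (fun n => by by_cases hn : n ∈ S <;> simp only [hn, if_true, if_false]; exacts [continuous_const, hg n])
    hb1 hb2 (B := fun n => 2 * K / (n:ℝ) ^ 4) hb3 hb4 hb5 sB
  have solL := Sol.sum S (V := fun n p => a n p.1 * chr n p.2) (H := fun n p => g n p.1 * chr n p.2)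
    (fun n hn => Sol.term (hg n) (ha n hn).1 (ha n hn).2.1)
  refine ⟨_, _, solL.add solH, fun s θ y hy => ?_, fun s θ => ?_⟩
  · have h1 : HasSum (fun n => if n ∈ S then g n s * chr n θ else 0)
        (∑ n ∈ S, if n ∈ S then g n s * chr n θ else 0) :=
      hasSum_sum_of_ne_finset_zero (fun n hn => by simp [hn])
    have h2 := (hy.sub h1).tsum_eq
    have h3 : ∀ n, g n s * chr n θ - (if n ∈ S then g n s * chr n θ else 0)
        = (if n ∈ S then 0 else g n s) * chr n θ := by
      intro n; by_cases hn : n ∈ S <;> simp [hn]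
    simp only [h3] at h2
    simp only
    rw [h2, Finset.sum_congr rfl (fun n hn => if_pos hn)]
    ring
  · rw [add_mul, Finset.sum_mul, ← tsum_mul_right]
    refine (norm_add_le _ _).trans (add_le_add ?_ ?_)
    · refine norm_sum_le_of_le _ fun n hn => ?_
      rw [norm_mul, norm_chr, mul_one]
      exact (ha n hn).2.2 s
    · refine tsum_of_norm_bounded (hD.mul_right _).hasSum fun n => ?_
      rw [norm_mul, norm_chr, mul_one]
      exact hbw n s

theorem key_lemma_finite_cylinder :
    ∀ α : ℝ, 0 < α → (∀ n : ℤ, α ≠ (n : ℝ)) → ∀ C₁ : ℝ, 0 < C₁ →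
    ∃ C₂ : ℝ, 0 < C₂ ∧
      ∀ L : ℝ, 1 ≤ L → ∀ f : ℝ × ℝ → ℝ,
        ContDiff ℝ (⊤ : ℕ∞) f →
        (∀ s θ : ℝ, f (s, θ + 2 * Real.pi) = f (s, θ)) →
        (∀ s θ : ℝ, s ∈ Set.Icc (-L) L →
          |f (s, θ)| ≤ C₁ * (Real.exp s + Real.exp (-s)) ^ α) →
        ∃ v : ℝ × ℝ → ℝ,
          ContDiff ℝ 2 v ∧
          (∀ s θ : ℝ, v (s, θ + 2 * Real.pi) = v (s, θ)) ∧
          (∀ s θ : ℝ, s ∈ Set.Icc (-L) L →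
            deriv (fun s' => deriv (fun s'' => v (s'', θ)) s') s +
              deriv (fun θ' => deriv (fun θ'' => v (s, θ'')) θ') θ = f (s, θ)) ∧
          (∀ s θ : ℝ, s ∈ Set.Icc (-L) L →
            |v (s, θ)| ≤ C₂ * (Real.exp s + Real.exp (-s)) ^ α) := by
  intro α hα hnonint C₁ hC₁
  obtain ⟨S, hS⟩ := exists_lowset α
  have hS' : ∀ n : ℤ, n ∉ S → α < |(n:ℝ)| := by
    intro n hn
    rw [hS, not_lt] at hn
    refine lt_of_le_of_ne hn fun h => hnonint |n| ?_
    rw [h]; push_cast; rfl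
  set m : ℝ := (⌈α⌉ : ℝ) with hm
  have hm1 : α < m := lt_of_le_of_ne (Int.le_ceil α) (hnonint _)
  have hm0 : 0 < m := hα.trans hm1
  have hmn : ∀ n : ℤ, n ∉ S → m ≤ |(n:ℝ)| := by
    intro n hn
    have h1 := (hS' n hn).le
    have : α ≤ ((|n| : ℤ) : ℝ) := by push_cast; exact h1
    have := Int.ceil_le.mpr this
    rw [hm]; exact_mod_cast this
  set δ := 1 - α / m with hδ
  have hδ0 : 0 < δ := by
    have : α / m < 1 := (div_lt_one hm0).mpr hm1
    linarith
  have hD : Summable fun n : ℤ => C₁ / δ * (1 / (n:ℝ) ^ 2) :=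
    (Real.summable_one_div_int_pow.mpr (by norm_num)).mul_left _
  have hDb : ∀ n : ℤ, n ∉ S →
      C₁ / (|(n:ℝ)| * (|(n:ℝ)| - α)) ≤ C₁ / δ * (1 / (n:ℝ) ^ 2) := by
    intro n hn
    have h1 := hmn n hn
    have h2 : 0 < |(n:ℝ)| := hm0.trans_le h1
    rw [← sq_abs, div_mul_div_comm, mul_one]
    have : δ * |(n:ℝ)| ≤ |(n:ℝ)| - α := by
      have : α ≤ α / m * |(n:ℝ)| := by
        rw [div_mul_eq_mul_div, le_div_iff₀ hm0]; gcongr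
      rw [hδ]; linarith
    refine div_le_div_of_nonneg_left hC₁.le (by positivity) ?_
    nlinarith
  have hlow0 : 0 ≤ ∑ n ∈ S, (C₁ * 2 ^ α / (α - |(n:ℝ)|) * 2 ^ α / (α - |(n:ℝ)|)) := by
    refine Finset.sum_nonneg fun n hn => ?_
    have := (hS n).mp hn
    have : 0 < α - |(n:ℝ)| := by linarith
    positivity
  have hhigh0 : 0 ≤ ∑' n : ℤ, C₁ / δ * (1 / (n:ℝ) ^ 2) := tsum_nonneg fun n => by positivity
  refine ⟨(∑ n ∈ S, (C₁ * 2 ^ α / (α - |(n:ℝ)|) * 2 ^ α / (α - |(n:ℝ)|)))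
    + (∑' n : ℤ, C₁ / δ * (1 / (n:ℝ) ^ 2)) + 1, by linarith, ?_⟩
  intro L hL f hf hper hbd
  set F : ℝ × ℝ → ℂ := fun p => (f p : ℂ) with hFdef
  have hF : ContDiff ℝ (⊤ : ℕ∞) F := Complex.ofRealCLM.contDiff.comp hf
  obtain ⟨G, hG, dG⟩ := partial_contDiff hF
  obtain ⟨G2, hG2, dG2⟩ := partial_contDiff hG
  have pF : ∀ s θ, F (s, θ + 2 * Real.pi) = F (s, θ) := fun s θ => by simp only [hFdef, hper]
  have pG : ∀ s θ, G (s, θ + 2 * Real.pi) = G (s, θ) := fun s θ => by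
    have h := (dG s (θ + 2 * Real.pi)).comp_add_const θ (2 * Real.pi)
    simp only [pF] at h
    exact h.unique (dG s θ)
  obtain ⟨K, hK⟩ := (isCompact_Icc.prod isCompact_Icc : IsCompact
    (Set.Icc (-L) L ×ˢ Set.Icc 0 (2 * Real.pi))).exists_bound_of_continuousOn hG2.continuous.continuousOn
  -- clamp
  let cl : ℝ → ℝ := fun s => max (-L) (min s L)
  have hcl : Continuous cl := by fun_prop
  have clmem : ∀ s, cl s ∈ Set.Icc (-L) L := fun s =>
    ⟨le_max_left _ _, max_le (by linarith) (min_le_right _ _)⟩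
  have clid : ∀ s ∈ Set.Icc (-L) L, cl s = s := fun s hs => by
    simp only [cl]; rw [min_eq_left hs.2, max_eq_right hs.1]
  have clabs : ∀ s, |cl s| ≤ |s| := by
    intro s
    by_cases hs : s ∈ Set.Icc (-L) L
    · rw [clid s hs]
    · have h1 : |cl s| ≤ L := abs_le.mpr (clmem s)
      refine h1.trans ?_
      by_contra h
      exact hs (abs_le.mp (not_le.mp h).le)
  let g : ℤ → ℝ → ℂ := fun n s => fc (fun θ => F (cl s, θ)) n
  have hg : ∀ n, Continuous (g n) := by
    intro n
    have h1 := (chr_contDiff (-n)).continuous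
    have h2 := hF.continuous
    have h3 : Continuous (Function.uncurry fun s t => chr (-n) t * F (cl s, t)) := by
      simp only [Function.uncurry_def]
      fun_prop
    exact (intervalIntegral.continuous_parametric_intervalIntegral_of_continuous'
      (μ := MeasureTheory.volume) h3 0 (2 * Real.pi)).const_smul (1 / (2 * Real.pi))
  have hA : ∀ n t, ‖g n t‖ ≤ C₁ * cylW α t := by
    intro n t
    refine fc_bound (fun θ _ => ?_) n
    simp only [hFdef, Complex.norm_real, Real.norm_eq_abs]
    refine (hbd _ θ (clmem t)).trans ?_
    exact mul_le_mul_of_nonneg_left (cylW_mono hα (clabs t)) hC₁.le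
  have hgK : ∀ n : ℤ, n ≠ 0 → ∀ t, ‖g n t‖ ≤ K / (n:ℝ) ^ 2 := by
    intro n hn t
    have e1 := fc_deriv (φ := fun θ => F (cl t, θ)) (dG (cl t))
      (hG.continuous.comp (by fun_prop)) (by simpa using pF (cl t) 0) n
    have e2 := fc_deriv (φ := fun θ => G (cl t, θ)) (dG2 (cl t))
      (hG2.continuous.comp (by fun_prop)) (by simpa using pG (cl t) 0) n
    have b := fc_bound (φ := fun θ => G2 (cl t, θ)) (K := K)
      (fun θ hθ => hK (cl t, θ) ⟨clmem t, hθ⟩) n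
    rw [e2, e1] at b
    simp only [norm_mul, Complex.norm_I, one_mul, Complex.norm_intCast] at b
    have hn' : (n:ℝ) ≠ 0 := by exact_mod_cast hn
    rw [le_div_iff₀ (by positivity), ← sq_abs]
    calc _ = |(n:ℝ)| * (|(n:ℝ)| * ‖fc (fun θ => F (cl t, θ)) n‖) := by ring
      _ ≤ K := b
  obtain ⟨V, H, hsol, hH, hV⟩ := cyl_main hα S hS hS' hD (fun n => by positivity) hDb hg hA hgK
  obtain ⟨r1, r2, r3⟩ := hsol.real
  refine ⟨fun p => (V p).re, r1, r2, fun s θ hs => ?_, fun s θ hs => ?_⟩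
  · rw [r3, hH s θ (F (s, θ))]
    · simp [hFdef]
    · have hsum : Summable (fc (fun θ => F (cl s, θ))) := by
        have h0 : Summable fun n : ℤ => K * (1 / (n:ℝ) ^ 2) :=
          (Real.summable_one_div_int_pow.mpr (by norm_num)).mul_left _
        refine Summable.of_norm_bounded_eventually h0 ?_
        refine (Set.finite_singleton (0:ℤ)).subset fun n hn => ?_
        by_contra h
        refine hn ?_
        have := hgK n h s
        rw [← mul_one_div] at this
        exact this
      have := fc_hasSum (φ := fun θ => F (cl s, θ)) (hF.continuous.comp (by fun_prop))
        (fun θ => pF (cl s) θ) hsum θ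
      simp only [clid s hs] at this
      simpa only [g, clid s hs] using this
  · refine (Complex.abs_re_le_norm _).trans ((hV s θ).trans ?_)
    exact mul_le_mul_of_nonneg_right (by linarith) (cylW_pos α s).le
end

section
/- Let k be a nonnegative integer. There exists a constant C > 0 depending only on k (and not on M, ε or u) with the following property. Let M ≥ 1, ε > 0, and let u : ℝ × ℝ → ℝ be 2π-periodic in its second variable, twice continuously differentiable on [-M,M] × ℝ, harmonic there (∂²u/∂s² + ∂²u/∂θ² = 0), with |u| ≤ ε on [-M,M] × ℝ. Let a₀, b₀ and aₙ, bₙ, cₙ, dₙ (1 ≤ n ≤ k) be the real numbers satisfying, for all s ∈ [-M,M]: (1/2π) ∫₀^{2π} u(s,θ) dθ = a₀ + b₀ s, (1/π) ∫₀^{2π} u(s,θ) cos(nθ) dθ = aₙ e^{ns} + cₙ e^{-ns}, and (1/π) ∫₀^{2π} u(s,θ) sin(nθ) dθ = bₙ e^{ns} + dₙ e^{-ns}. Define P_k(s,θ) = a₀ + b₀ s + Σ_{n=1}^{k} (aₙ e^{ns} cos nθ + bₙ e^{ns} sin nθ + cₙ e^{-ns} cos nθ + dₙ e^{-ns} sin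 nθ). Then |u(s,θ) - P_k(s,θ)| ≤ C ε e^{-(k+1)M} e^{(k+1)|s|} for all (s,θ) ∈ [-M,M] × ℝ. -/
lemma hct_const {M : ℝ} {f : ℝ → ℝ} (h : ∀ s ∈ Set.Ioo (-M) M, HasDerivAt f 0 s) :
    ∃ c, ∀ s ∈ Set.Ioo (-M) M, f s = c := by
  apply isOpen_Ioo.exists_is_const_of_deriv_eq_zero (convex_Ioo _ _).isPreconnected
  · intro s hs; exact (h s hs).differentiableAt.differentiableWithinAt
  · intro s hs; exact (h s hs).deriv

lemma hct_ode {M B n : ℝ} (hM : 1 ≤ M) (hn : 1 ≤ n) {g g' : ℝ → ℝ}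
    (h1 : ∀ s ∈ Set.Ioo (-M) M, HasDerivAt g (g' s) s)
    (h2 : ∀ s ∈ Set.Ioo (-M) M, HasDerivAt g' (n ^ 2 * g s) s)
    (hB : ∀ s ∈ Set.Ioo (-M) M, |g s| ≤ B) {s : ℝ} (hs : |s| ≤ M - 1 / 2) :
    |g s| ≤ 4 * B * Real.exp (-(n * (M - 1 / 2 - |s|))) := by
  have hE : ∀ (m s : ℝ), HasDerivAt (fun x => Real.exp (m * x)) (Real.exp (m * s) * m) s := by
    intro m s
    simpa using ((hasDerivAt_id s).const_mul m).exp
  obtain ⟨p, hp⟩ := hct_const (M := M) (f := fun s => (g' s + n * g s) * Real.exp (-n * s)) (by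
    intro s hs
    convert! ((h2 s hs).add ((h1 s hs).const_mul n)).mul (hE (-n) s) using 1
    simp only [Pi.add_apply]; ring)
  obtain ⟨q, hq⟩ := hct_const (M := M) (f := fun s => (g' s - n * g s) * Real.exp (n * s)) (by
    intro s hs
    convert! ((h2 s hs).sub ((h1 s hs).const_mul n)).mul (hE n s) using 1
    simp only [Pi.sub_apply]; ring)
  obtain ⟨α, γ, hg⟩ : ∃ α γ : ℝ, ∀ s ∈ Set.Ioo (-M) M,
      g s = α * Real.exp (n * s) + γ * Real.exp (-(n * s)) := by
    refine ⟨p / (2 * n), -q / (2 * n), fun s hs => ?_⟩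
    rw [← hp s hs, ← hq s hs]
    have : Real.exp (-n * s) * Real.exp (n * s) = 1 := by
      rw [← Real.exp_add]; simp
    have hn' : n ≠ 0 := by positivity
    rw [neg_mul] at this ⊢
    field_simp
    linear_combination (-(g' s + n * g s) + (g' s - n * g s)) * this
  set r := M - 1 / 2 with hr
  have hB0 : 0 ≤ B := le_trans (abs_nonneg _) (hB 0 ⟨by linarith, by linarith⟩)
  have e1 := hB r ⟨by linarith, by linarith⟩
  have e2 := hB (-r) ⟨by linarith, by linarith⟩
  rw [hg r ⟨by linarith, by linarith⟩] at e1
  rw [hg (-r) ⟨by linarith, by linarith⟩] at e2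
  have hxy : Real.exp (n * r) * Real.exp (-(n * r)) = 1 := by
    rw [← Real.exp_add]; simp
  rw [mul_neg, neg_neg] at e2
  have hx2 : 2 ≤ Real.exp (n * r) * Real.exp (n * r) := by
    rw [← Real.exp_add]
    have : (1:ℝ) ≤ n * r + n * r := by nlinarith
    linarith [Real.add_one_le_exp (n * r + n * r)]
  have hx : 0 < Real.exp (n * r) := Real.exp_pos _
  have hy : 0 < Real.exp (-(n * r)) := Real.exp_pos _
  set x := Real.exp (n * r)
  set y := Real.exp (-(n * r))
  have hxy2 : 2 * y ≤ x := by nlinarith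
  have key : ∀ α γ : ℝ, |α * x + γ * y| ≤ B → |α * y + γ * x| ≤ B → |α| ≤ 2 * B * y := by
    intro α γ e1 e2
    have h3 : |α| * ((x - y) * (x + y)) ≤ B * (x + y) := by
      have : α * ((x - y) * (x + y)) = x * (α * x + γ * y) - y * (α * y + γ * x) := by ring
      rw [← abs_of_nonneg (show 0 ≤ (x - y) * (x + y) by
        apply mul_nonneg <;> linarith), ← abs_mul, this]
      refine (abs_sub _ _).trans ?_
      rw [abs_mul, abs_mul, abs_of_pos hx, abs_of_pos hy]
      nlinarith
    have h4 : |α| * (x - y) ≤ B := by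
      rw [← mul_assoc] at h3
      exact le_of_mul_le_mul_right h3 (by linarith)
    have h5 : |α| * (x / 2) ≤ B := le_trans (by gcongr; linarith) h4
    calc |α| = 2 * (|α| * (x / 2)) * y := by linear_combination (-|α|) * hxy
      _ ≤ 2 * B * y := by gcongr
  have hα := key α γ e1 e2
  have hγ := key γ α (by rwa [add_comm]) (by rwa [add_comm])
  have hs' := abs_le.1 hs
  rw [hg s ⟨by linarith, by linarith⟩]
  have : Real.exp (-(n * (r - |s|))) = y * Real.exp (n * |s|) := by
    rw [← Real.exp_add]; ring_nf
  rw [this]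
  refine (abs_add_le _ _).trans ?_
  rw [abs_mul, abs_mul, Real.abs_exp, Real.abs_exp]
  have f1 : Real.exp (n * s) ≤ Real.exp (n * |s|) := by
    gcongr; exact le_abs_self s
  have f2 : Real.exp (-(n * s)) ≤ Real.exp (n * |s|) := by
    rw [← mul_neg]; gcongr; exact neg_le_abs s
  calc _ ≤ 2 * B * y * Real.exp (n * |s|) + 2 * B * y * Real.exp (n * |s|) := by gcongr
    _ = _ := by ring

lemma hct_partial {M : ℝ} {f : ℝ × ℝ → ℝ}
    (hf : ContDiffOn ℝ 1 f (Set.Ioo (-M) M ×ˢ (Set.univ : Set ℝ))) {s : ℝ}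
    (hs : s ∈ Set.Ioo (-M) M) (θ : ℝ) :
    HasDerivAt (fun s => f (s, θ)) (fderiv ℝ f (s, θ) (1, 0)) s ∧
    HasDerivAt (fun θ => f (s, θ)) (fderiv ℝ f (s, θ) (0, 1)) θ := by
  have hd : HasFDerivAt f (fderiv ℝ f (s, θ)) (s, θ) :=
    ((hf.contDiffAt ((isOpen_Ioo.prod isOpen_univ).mem_nhds (by simpa using hs))).differentiableAt
      (by norm_num)).hasFDerivAt
  constructor
  · exact hd.comp_hasDerivAt s (f := fun s => (s, θ)) ((hasDerivAt_id s).prodMk (hasDerivAt_const s θ))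
  · exact hd.comp_hasDerivAt θ (f := fun θ => (s, θ)) ((hasDerivAt_const θ s).prodMk (hasDerivAt_id θ))

lemma hct_slice {M : ℝ} {f : ℝ × ℝ → ℝ}
    (hf : ContinuousOn f (Set.Ioo (-M) M ×ˢ (Set.univ : Set ℝ))) {s : ℝ}
    (hs : s ∈ Set.Ioo (-M) M) : Continuous fun θ => f (s, θ) :=
  hf.comp_continuous (by fun_prop) (by intro x; simpa using hs)

lemma hct_int {M : ℝ} {f : ℝ × ℝ → ℝ}
    (hf : ContDiffOn ℝ 1 f (Set.Ioo (-M) M ×ˢ (Set.univ : Set ℝ))) {s : ℝ}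
    (hs : s ∈ Set.Ioo (-M) M) {φ : ℝ → ℝ} (hφ : Continuous φ) :
    HasDerivAt (fun s => ∫ θ in (0:ℝ)..(2 * Real.pi), f (s, θ) * φ θ)
      (∫ θ in (0:ℝ)..(2 * Real.pi), fderiv ℝ f (s, θ) (1, 0) * φ θ) s := by
  have hc : ContinuousOn (fun x => fderiv ℝ f x (1, 0)) (Set.Ioo (-M) M ×ˢ (Set.univ : Set ℝ)) :=
    (hf.continuousOn_fderiv_of_isOpen (isOpen_Ioo.prod isOpen_univ) le_rfl).clm_apply
      continuousOn_const
  obtain ⟨l, hl, hl'⟩ := exists_between hs.1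
  obtain ⟨r, hr, hr'⟩ := exists_between hs.2
  have hsub : Set.Icc l r ⊆ Set.Ioo (-M) M := fun x hx => ⟨by linarith [hx.1], by linarith [hx.2]⟩
  have hc2 : ContinuousOn (fun x : ℝ × ℝ => fderiv ℝ f x (1, 0) * φ x.2)
      (Set.Icc l r ×ˢ Set.Icc 0 (2 * Real.pi)) :=
    (hc.mono (Set.prod_mono hsub (Set.subset_univ _))).mul (by fun_prop)
  obtain ⟨B, hB⟩ := (isCompact_Icc.prod isCompact_Icc).exists_bound_of_continuousOn hc2
  have hpi : (0:ℝ) ≤ 2 * Real.pi := by positivity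
  refine (intervalIntegral.hasDerivAt_integral_of_dominated_loc_of_deriv_le (μ := MeasureTheory.volume)
    (F := fun s θ => f (s, θ) * φ θ) (F' := fun s θ => fderiv ℝ f (s, θ) (1, 0) * φ θ)
    (s := Set.Icc l r) (bound := fun _ => B) (Icc_mem_nhds hl' hr) ?_ ?_ ?_ ?_ ?_ ?_).2
  · filter_upwards [isOpen_Ioo.mem_nhds hs] with x hx
    exact ((hct_slice hf.continuousOn hx).mul hφ).aestronglyMeasurable
  · exact ((hct_slice hf.continuousOn hs).mul hφ).intervalIntegrable _ _
  · exact ((hct_slice hc hs).mul hφ).aestronglyMeasurable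
  · refine Filter.Eventually.of_forall fun t ht x hx => ?_
    rw [Set.uIoc_of_le hpi] at ht
    exact hB (x, t) ⟨hx, Set.Ioc_subset_Icc_self ht⟩
  · exact intervalIntegrable_const
  · refine Filter.Eventually.of_forall fun t ht x hx => ?_
    exact (hct_partial hf (hsub hx) t).1.mul_const _

/-- Fourier coefficients decay. -/
lemma hct_coef {M ε n : ℝ} (hM : 1 ≤ M) (hn : 1 ≤ n) {u : ℝ × ℝ → ℝ}
    (hper : ∀ s θ : ℝ, u (s, θ + 2 * Real.pi) = u (s, θ))
    (hu : ContDiffOn ℝ 2 u (Set.Ioo (-M) M ×ˢ (Set.univ : Set ℝ)))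
    (hharm : ∀ s ∈ Set.Ioo (-M) M, ∀ θ : ℝ,
          deriv (fun s' => deriv (fun s'' => u (s'', θ)) s') s +
            deriv (fun θ' => deriv (fun θ'' => u (s, θ'')) θ') θ = 0)
    (hB : ∀ s ∈ Set.Ioo (-M) M, ∀ θ : ℝ, |u (s, θ)| ≤ ε)
    {φ ψ : ℝ → ℝ} (hφ : ∀ θ, HasDerivAt φ (ψ θ) θ) (hψ : ∀ θ, HasDerivAt ψ (-(n ^ 2 * φ θ)) θ)
    (hφp : φ (2 * Real.pi) = φ 0) (hψp : ψ (2 * Real.pi) = ψ 0) (hφ1 : ∀ θ, |φ θ| ≤ 1)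
    {s : ℝ} (hs : |s| ≤ M - 1 / 2) :
    |∫ θ in (0:ℝ)..(2 * Real.pi), u (s, θ) * φ θ| ≤
      8 * Real.pi * ε * Real.exp (-(n * (M - 1 / 2 - |s|))) := by
  have hpi : (0:ℝ) ≤ 2 * Real.pi := by positivity
  have hφc : Continuous φ := continuous_iff_continuousAt.2 fun x => (hφ x).continuousAt
  have hψc : Continuous ψ := continuous_iff_continuousAt.2 fun x => (hψ x).continuousAt
  have ho : IsOpen (Set.Ioo (-M) M ×ˢ (Set.univ : Set ℝ)) := isOpen_Ioo.prod isOpen_univ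
  have hu1 := hu.of_le (m := 1) (by norm_num)
  have hfd : ContDiffOn ℝ 1 (fderiv ℝ u) (Set.Ioo (-M) M ×ˢ (Set.univ : Set ℝ)) :=
    hu.fderiv_of_isOpen ho (by norm_num)
  have hv : ContDiffOn ℝ 1 (fun x => fderiv ℝ u x (1, 0)) (Set.Ioo (-M) M ×ˢ (Set.univ : Set ℝ)) :=
    hfd.clm_apply contDiffOn_const
  have hw : ContDiffOn ℝ 1 (fun x => fderiv ℝ u x (0, 1)) (Set.Ioo (-M) M ×ˢ (Set.univ : Set ℝ)) :=
    hfd.clm_apply contDiffOn_const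
  set v := fun x => fderiv ℝ u x (1, 0) with hvdef
  set w := fun x => fderiv ℝ u x (0, 1) with hwdef
  have hwc2 : ContinuousOn (fun x => fderiv ℝ w x (0, 1)) (Set.Ioo (-M) M ×ˢ (Set.univ : Set ℝ)) :=
    (hw.continuousOn_fderiv_of_isOpen ho le_rfl).clm_apply continuousOn_const
  have hlap : ∀ s ∈ Set.Ioo (-M) M, ∀ θ, fderiv ℝ v (s, θ) (1, 0) = -fderiv ℝ w (s, θ) (0, 1) := by
    intro s hs θ
    have h := hharm s hs θ
    have e1 : deriv (fun s' => deriv (fun s'' => u (s'', θ)) s') s = fderiv ℝ v (s, θ) (1, 0) := by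
      rw [← (hct_partial hv hs θ).1.deriv]
      apply Filter.EventuallyEq.deriv_eq
      filter_upwards [isOpen_Ioo.mem_nhds hs] with x hx
      exact (hct_partial hu1 hx θ).1.deriv
    have e2 : deriv (fun θ' => deriv (fun θ'' => u (s, θ'')) θ') θ = fderiv ℝ w (s, θ) (0, 1) := by
      rw [← (hct_partial hw hs θ).2.deriv]
      congr 1
      funext x
      exact (hct_partial hu1 hs x).2.deriv
    rw [e1, e2] at h
    linarith
  have hwper : ∀ s ∈ Set.Ioo (-M) M, w (s, 2 * Real.pi) = w (s, 0) := by
    intro s hs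
    have h1 := (hct_partial hu1 hs (2 * Real.pi)).2
    have h2 := (hct_partial hu1 hs 0).2
    have h3 : HasDerivAt (fun θ => u (s, θ + 2 * Real.pi)) (w (s, 2 * Real.pi)) 0 :=
      HasDerivAt.comp_add_const (f := fun θ => u (s, θ)) 0 (2 * Real.pi) (by simpa using h1)
    simp only [hper] at h3
    exact h3.unique h2
  have hup : ∀ s, u (s, 2 * Real.pi) = u (s, 0) := fun s => by simpa using hper s 0
  have hmain : ∀ s ∈ Set.Ioo (-M) M, ∫ θ in (0:ℝ)..(2 * Real.pi), fderiv ℝ v (s, θ) (1, 0) * φ θ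
      = n ^ 2 * ∫ θ in (0:ℝ)..(2 * Real.pi), u (s, θ) * φ θ := by
    intro s hs
    have uc := hct_slice hu.continuousOn hs
    have wc := hct_slice hw.continuousOn hs
    have w2c := hct_slice hwc2 hs
    have i0 := intervalIntegral.integral_eq_sub_of_hasDerivAt (a := 0) (b := 2 * Real.pi)
      (f := fun θ => w (s, θ) * φ θ - u (s, θ) * ψ θ)
      (f' := fun θ => fderiv ℝ w (s, θ) (0, 1) * φ θ + n ^ 2 * (u (s, θ) * φ θ))
      (fun θ _ => by
        convert! ((hct_partial hw hs θ).2.mul (hφ θ)).sub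
          ((hct_partial hu1 hs θ).2.mul (hψ θ)) using 1
        simp only [hwdef]; ring)
      (((w2c.mul hφc).add (continuous_const.mul (uc.mul hφc))).intervalIntegrable _ _)
    have j1 : Continuous fun θ => fderiv ℝ w (s, θ) (0, 1) * φ θ := w2c.mul hφc
    have j2 : Continuous fun θ => n ^ 2 * (u (s, θ) * φ θ) := continuous_const.mul (uc.mul hφc)
    rw [intervalIntegral.integral_add (j1.intervalIntegrable _ _) (j2.intervalIntegrable _ _),
      intervalIntegral.integral_const_mul] at i0
    simp only [hwper s hs, hφp, hψp, hup, sub_self] at i0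
    simp only [hlap s hs, neg_mul]
    rw [intervalIntegral.integral_neg]
    linarith
  have := hct_ode hM hn (B := 2 * Real.pi * ε)
    (g := fun s => ∫ θ in (0:ℝ)..(2 * Real.pi), u (s, θ) * φ θ)
    (g' := fun s => ∫ θ in (0:ℝ)..(2 * Real.pi), v (s, θ) * φ θ)
    (fun s hs => hct_int hu1 hs hφc)
    (fun s hs => by rw [← hmain s hs]; exact hct_int hv hs hφc)
    (fun s hs => by
      have := intervalIntegral.norm_integral_le_of_norm_le_const (a := 0) (b := 2 * Real.pi)
        (f := fun θ => u (s, θ) * φ θ) (C := ε) (fun θ _ => by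
          rw [norm_mul, Real.norm_eq_abs, Real.norm_eq_abs]
          have := mul_le_mul (hB s hs θ) (hφ1 θ) (abs_nonneg _) (le_trans (abs_nonneg _) (hB s hs θ))
          simpa using this)
      rw [sub_zero, abs_of_nonneg hpi, Real.norm_eq_abs] at this
      linarith) hs
  refine this.trans (le_of_eq ?_)
  ring

lemma hct_fourier {f : ℝ → ℝ} (hf : Continuous f) (hp : ∀ θ, f (θ + 2 * Real.pi) = f θ)
    {A B : ℕ → ℝ}
    (hA : ∀ n : ℕ, A n = ∫ θ in (0:ℝ)..(2 * Real.pi), f θ * Real.cos (n * θ))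
    (hB : ∀ n : ℕ, B n = ∫ θ in (0:ℝ)..(2 * Real.pi), f θ * Real.sin (n * θ))
    {K q : ℝ} (hq0 : 0 ≤ q) (hq1 : q < 1)
    (hA' : ∀ n : ℕ, |A n| ≤ K * q ^ n) (hB' : ∀ n : ℕ, |B n| ≤ K * q ^ n) (θ : ℝ) :
    HasSum (fun n : ℕ => (1 / Real.pi) * (A n * Real.cos (n * θ) + B n * Real.sin (n * θ)))
      (f θ + (1 / (2 * Real.pi)) * A 0) := by
  have hpi := Real.pi_pos
  have : Fact (0 < 2 * Real.pi) := ⟨by positivity⟩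
  have hper : Function.Periodic (fun θ => (f θ : ℂ)) (2 * Real.pi) := fun θ => by simp [hp]
  let F : C(AddCircle (2 * Real.pi), ℂ) :=
    ⟨hper.lift, continuous_coinduced_dom.2 (Complex.continuous_ofReal.comp hf)⟩
  have hF : ∀ x : ℝ, F (x : AddCircle (2 * Real.pi)) = f x := fun x => rfl
  have hfo : ∀ (n : ℤ) (x : ℝ), fourier n (x : AddCircle (2 * Real.pi)) =
      ((Real.cos (n * x) : ℝ) : ℂ) + ((Real.sin (n * x) : ℝ) : ℂ) * Complex.I := by
    intro n x
    rw [fourier_coe_apply]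
    have : (2 * Real.pi * Complex.I * n * x / ((2 * Real.pi : ℝ) : ℂ)) = ((n * x : ℝ) : ℂ) * Complex.I := by
      have : (Real.pi : ℂ) ≠ 0 := by exact_mod_cast hpi.ne'
      push_cast
      field_simp
    rw [this, Complex.exp_mul_I, Complex.ofReal_cos, Complex.ofReal_sin]
  have hint : ∀ n : ℤ, fourierCoeff F n = (1 / (2 * Real.pi) : ℝ) *
      (((∫ θ in (0:ℝ)..(2 * Real.pi), f θ * Real.cos (n * θ) : ℝ) : ℂ)
        - ((∫ θ in (0:ℝ)..(2 * Real.pi), f θ * Real.sin (n * θ) : ℝ) : ℂ) * Complex.I) := by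
    intro n
    have c1 : Continuous fun θ => ((f θ * Real.cos (n * θ) : ℝ) : ℂ) := by fun_prop
    have c2 : Continuous fun θ => ((f θ * Real.sin (n * θ) : ℝ) : ℂ) * Complex.I := by fun_prop
    rw [fourierCoeff_eq_intervalIntegral F n 0, zero_add, Complex.real_smul]
    congr 1
    rw [← intervalIntegral.integral_ofReal, ← intervalIntegral.integral_ofReal,
      ← intervalIntegral.integral_mul_const,
      ← intervalIntegral.integral_sub (c1.intervalIntegrable _ _) (c2.intervalIntegrable _ _)]
    congr 1
    funext x
    rw [hF, hfo, smul_eq_mul]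
    simp only [Int.cast_neg, neg_mul, Real.cos_neg, Real.sin_neg, Complex.ofReal_mul, Complex.ofReal_neg]
    ring
  have hpos : ∀ n : ℕ, fourierCoeff F n = (1 / (2 * Real.pi) : ℝ) * ((A n : ℂ) - B n * Complex.I) := by
    intro n
    rw [hint, hA, hB]
    simp only [Int.cast_natCast]
  have hneg : ∀ n : ℕ, fourierCoeff F (-n) = (1 / (2 * Real.pi) : ℝ) * ((A n : ℂ) + B n * Complex.I) := by
    intro n
    rw [hint, hA, hB]
    simp only [Int.cast_natCast, Int.cast_neg, neg_mul, Real.cos_neg, Real.sin_neg, mul_neg,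
      intervalIntegral.integral_neg, Complex.ofReal_neg, sub_neg_eq_add]
  have hsg : Summable fun n : ℕ => (1 / (2 * Real.pi)) * (2 * K * q ^ n) :=
    ((summable_geometric_of_lt_one hq0 hq1).mul_left _).mul_left _
  have hnb : ∀ n : ℕ, ‖(A n : ℂ)‖ ≤ K * q ^ n ∧ ‖(B n : ℂ) * Complex.I‖ ≤ K * q ^ n := fun n =>
    ⟨by simpa using hA' n, by simpa using hB' n⟩
  have hsum : Summable (fourierCoeff F) := by
    apply Summable.of_nat_of_neg
    · refine hsg.of_norm_bounded fun n => ?_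
      rw [hpos, norm_mul, Complex.norm_real, Real.norm_of_nonneg (by positivity)]
      gcongr
      refine (norm_sub_le _ _).trans ?_
      linarith [(hnb n).1, (hnb n).2]
    · refine hsg.of_norm_bounded fun n => ?_
      rw [hneg, norm_mul, Complex.norm_real, Real.norm_of_nonneg (by positivity)]
      gcongr
      refine (norm_add_le _ _).trans ?_
      linarith [(hnb n).1, (hnb n).2]
  have h := (has_pointwise_sum_fourier_series_of_summable hsum (θ : AddCircle (2 * Real.pi))).nat_add_neg
  rw [← Complex.hasSum_ofReal]
  have hB0 : B 0 = 0 := by rw [hB]; simp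
  convert! h using 1
  · funext n
    rw [hpos, hneg, hfo, hfo]
    simp only [Int.cast_natCast, Int.cast_neg, neg_mul, Real.cos_neg, Real.sin_neg, smul_eq_mul]
    push_cast
    linear_combination (2 * (1 / (2 * (Real.pi : ℂ))) * (B n) * Complex.sin (n * θ)) * Complex.I_sq
  · have := hpos 0
    rw [Nat.cast_zero] at this
    rw [this, hF, hfo, hB0]
    simp


/-- Lemma 3.4: for a harmonic function `u` on `[-M,M] × S¹` with `|u| ≤ ε` and `M ≥ 1`,
the remainder after subtracting the degree-`k` truncation `P_k` of its Fourier expansion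
satisfies `|u - P_k| ≤ C ε e^{-(k+1)M} e^{(k+1)|s|}`, with `C = C(k)` independent of `M`. -/
theorem harmonic_cylinder_truncation (k : ℕ) :
    ∃ C : ℝ, 0 < C ∧
      ∀ (M ε : ℝ), 1 ≤ M → 0 < ε →
      ∀ u : ℝ × ℝ → ℝ,
        (∀ s θ : ℝ, u (s, θ + 2 * Real.pi) = u (s, θ)) →
        ContDiffOn ℝ 2 u (Set.Icc (-M) M ×ˢ (Set.univ : Set ℝ)) →
        (∀ s ∈ Set.Icc (-M) M, ∀ θ : ℝ,
          deriv (fun s' => deriv (fun s'' => u (s'', θ)) s') s +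
            deriv (fun θ' => deriv (fun θ'' => u (s, θ'')) θ') θ = 0) →
        (∀ s ∈ Set.Icc (-M) M, ∀ θ : ℝ, |u (s, θ)| ≤ ε) →
        ∀ (a₀ b₀ : ℝ) (a b c d : ℕ → ℝ),
          (∀ s ∈ Set.Icc (-M) M,
            (1 / (2 * Real.pi)) * ∫ θ in (0:ℝ)..(2 * Real.pi), u (s, θ) = a₀ + b₀ * s ∧
            ∀ n : ℕ, 1 ≤ n → n ≤ k →
              ((1 / Real.pi) * ∫ θ in (0:ℝ)..(2 * Real.pi), u (s, θ) * Real.cos (n * θ) =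
                  a n * Real.exp (n * s) + c n * Real.exp (-(n * s))) ∧
              ((1 / Real.pi) * ∫ θ in (0:ℝ)..(2 * Real.pi), u (s, θ) * Real.sin (n * θ) =
                  b n * Real.exp (n * s) + d n * Real.exp (-(n * s)))) →
          ∀ s ∈ Set.Icc (-M) M, ∀ θ : ℝ,
            |u (s, θ) -
                (a₀ + b₀ * s +
                  ∑ n ∈ Finset.Icc 1 k,
                    (a n * Real.exp (n * s) * Real.cos (n * θ) +
                      b n * Real.exp (n * s) * Real.sin (n * θ) +
                      c n * Real.exp (-(n * s)) * Real.cos (n * θ) +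
                      d n * Real.exp (-(n * s)) * Real.sin (n * θ)))| ≤
              C * ε * Real.exp (-((k + 1) * M)) * Real.exp ((k + 1) * |s|) := by
  have hpi := Real.pi_pos
  refine ⟨(50 + 4 * k) * Real.exp (k + 1), by positivity, ?_⟩
  intro M ε hM hε u hper hu hharm hB a₀ b₀ a b c d hcoef s hs θ
  have hsub : Set.Ioo (-M) M ⊆ Set.Icc (-M) M := Set.Ioo_subset_Icc_self
  have hu' := hu.mono (Set.prod_mono hsub (subset_refl (Set.univ : Set ℝ)))
  have hharm' := fun s hs => hharm s (hsub hs)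
  have hB2 := fun s hs => hB s (hsub hs)
  obtain ⟨h0, hk⟩ := hcoef s hs
  set A : ℕ → ℝ := fun n => ∫ θ in (0:ℝ)..(2 * Real.pi), u (s, θ) * Real.cos (n * θ) with hA
  set B : ℕ → ℝ := fun n => ∫ θ in (0:ℝ)..(2 * Real.pi), u (s, θ) * Real.sin (n * θ) with hBd
  have hA0 : A 0 = ∫ θ in (0:ℝ)..(2 * Real.pi), u (s, θ) := by simp [hA]
  have hbd : ∀ φ : ℝ → ℝ, (∀ θ, |φ θ| ≤ 1) →
      |∫ θ in (0:ℝ)..(2 * Real.pi), u (s, θ) * φ θ| ≤ 2 * Real.pi * ε := by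
    intro φ hφ1
    have := intervalIntegral.norm_integral_le_of_norm_le_const (a := 0) (b := 2 * Real.pi)
        (f := fun θ => u (s, θ) * φ θ) (C := ε) (fun θ _ => by
          rw [norm_mul, Real.norm_eq_abs, Real.norm_eq_abs]
          have := mul_le_mul (hB s hs θ) (hφ1 θ) (abs_nonneg _) hε.le
          simpa using this)
    rw [sub_zero, abs_of_nonneg (by positivity), Real.norm_eq_abs] at this
    linarith
  have hAb : ∀ n, |A n| ≤ 2 * Real.pi * ε := fun n => hbd _ fun θ => Real.abs_cos_le_one _
  have hBb : ∀ n, |B n| ≤ 2 * Real.pi * ε := fun n => hbd _ fun θ => Real.abs_sin_le_one _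
  set T : ℕ → ℝ := fun n => (1 / Real.pi) * (A n * Real.cos (n * θ) + B n * Real.sin (n * θ)) with hT
  have hTb : ∀ n K, |A n| ≤ 2 * Real.pi * K → |B n| ≤ 2 * Real.pi * K → |T n| ≤ 4 * K := by
    intro n K h1 h2
    have e1 : |A n * Real.cos (n * θ)| ≤ 2 * Real.pi * K := by
      rw [abs_mul]
      exact (mul_le_of_le_one_right (abs_nonneg _) (Real.abs_cos_le_one _)).trans h1
    have e2 : |B n * Real.sin (n * θ)| ≤ 2 * Real.pi * K := by
      rw [abs_mul]
      exact (mul_le_of_le_one_right (abs_nonneg _) (Real.abs_sin_le_one _)).trans h2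
    rw [hT]
    simp only
    rw [abs_mul, abs_of_pos (by positivity)]
    calc _ ≤ (1 / Real.pi) * (2 * Real.pi * K + 2 * Real.pi * K) := by
          gcongr
          exact (abs_add_le _ _).trans (add_le_add e1 e2)
      _ = _ := by field_simp; ring
  have hP : (a₀ + b₀ * s +
                  ∑ n ∈ Finset.Icc 1 k,
                    (a n * Real.exp (n * s) * Real.cos (n * θ) +
                      b n * Real.exp (n * s) * Real.sin (n * θ) +
                      c n * Real.exp (-(n * s)) * Real.cos (n * θ) +
                      d n * Real.exp (-(n * s)) * Real.sin (n * θ))) =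
      (1 / (2 * Real.pi)) * A 0 + ∑ n ∈ Finset.Icc 1 k, T n := by
    rw [hA0, h0]
    congr 1
    refine Finset.sum_congr rfl fun n hn => ?_
    rw [Finset.mem_Icc] at hn
    obtain ⟨e1, e2⟩ := hk n hn.1 hn.2
    change (1 / Real.pi) * A n = _ at e1
    change (1 / Real.pi) * B n = _ at e2
    simp only [hT]
    linear_combination (-Real.cos (n * θ)) * e1 - Real.sin (n * θ) * e2
  rw [hP]
  have hgoal : (50 + 4 * (k:ℝ)) * Real.exp (k + 1) * ε * Real.exp (-((k + 1) * M)) *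
      Real.exp ((k + 1) * |s|) = (50 + 4 * k) * ε * Real.exp ((k + 1) * (1 - (M - |s|))) := by
    have : ((k:ℝ) + 1) * (1 - (M - |s|)) = (k + 1) + (-((k + 1) * M)) + (k + 1) * |s| := by ring
    rw [this, Real.exp_add (_ + _) (_ * |s|), Real.exp_add _ (-_)]; ring
  rw [hgoal]
  by_cases hsM : M - 1 < |s|
  · -- near the boundary
    have h1 : |(1 / (2 * Real.pi)) * A 0| ≤ ε := by
      rw [abs_mul, abs_of_pos (by positivity)]
      calc _ ≤ (1 / (2 * Real.pi)) * (2 * Real.pi * ε) := by gcongr; exact hAb 0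
        _ = ε := by field_simp
    have h2 : |∑ n ∈ Finset.Icc 1 k, T n| ≤ k * (4 * ε) := by
      refine (Finset.abs_sum_le_sum_abs _ _).trans ?_
      refine (Finset.sum_le_sum fun n _ => hTb n ε (hAb n) (hBb n)).trans ?_
      simp
    have h3 : |u (s, θ) - ((1 / (2 * Real.pi)) * A 0 + ∑ n ∈ Finset.Icc 1 k, T n)| ≤
        ε + (ε + k * (4 * ε)) :=
      (abs_sub _ _).trans (add_le_add (hB s hs θ) ((abs_add_le _ _).trans (add_le_add h1 h2)))
    have h4 : 1 ≤ Real.exp (((k:ℝ) + 1) * (1 - (M - |s|))) := by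
      apply Real.one_le_exp
      apply mul_nonneg <;> [positivity; linarith]
    have h5 : (50 + 4 * (k:ℝ)) * ε * 1 ≤
        (50 + 4 * k) * ε * Real.exp (((k:ℝ) + 1) * (1 - (M - |s|))) := by gcongr
    nlinarith
  · push Not at hsM
    set δ := M - 1 / 2 - |s| with hδ
    have hδ2 : 1 / 2 ≤ δ := by linarith
    have hsI : s ∈ Set.Ioo (-M) M := by
      have := abs_le.1 hsM
      constructor <;> linarith
    set q := Real.exp (-δ) with hq
    have hqn : ∀ n : ℕ, q ^ n = Real.exp (-(n * δ)) := by
      intro n; rw [hq, ← Real.exp_nat_mul]; ring_nf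
    have hq0 : 0 ≤ q := (Real.exp_pos _).le
    have hq23 : q ≤ 2 / 3 := by
      have h1 : (3:ℝ) / 2 ≤ Real.exp δ := by linarith [Real.add_one_le_exp δ]
      have h2 : q * Real.exp δ = 1 := by rw [hq, ← Real.exp_add]; simp
      nlinarith
    have hdecA : ∀ n : ℕ, |A n| ≤ 8 * Real.pi * ε * q ^ n := by
      intro n
      rcases Nat.eq_zero_or_pos n with rfl | hn
      · have := hAb 0
        have h2 : 0 < Real.pi * ε := by positivity
        simp only [pow_zero]; linarith
      · rw [hqn]
        refine hct_coef hM (by exact_mod_cast hn) hper hu' hharm' hB2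
          (φ := fun θ => Real.cos (n * θ)) (ψ := fun θ => -(n * Real.sin (n * θ))) ?_ ?_ ?_ ?_
          (fun θ => Real.abs_cos_le_one _) (by linarith)
        · intro θ
          convert! ((hasDerivAt_id θ).const_mul (n:ℝ)).cos using 1
          simp; ring
        · intro θ
          convert! ((((hasDerivAt_id θ).const_mul (n:ℝ)).sin).const_mul (n:ℝ)).neg using 1
          simp; ring
        · simp
        · have := Real.sin_nat_mul_two_pi_sub 0 n
          simp only [sub_zero, Real.sin_zero, neg_zero] at this
          simp [this]
    have hdecB : ∀ n : ℕ, |B n| ≤ 8 * Real.pi * ε * q ^ n := by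
      intro n
      rcases Nat.eq_zero_or_pos n with rfl | hn
      · have := hBb 0
        have h2 : 0 < Real.pi * ε := by positivity
        simp only [pow_zero]; linarith
      · rw [hqn]
        refine hct_coef hM (by exact_mod_cast hn) hper hu' hharm' hB2
          (φ := fun θ => Real.sin (n * θ)) (ψ := fun θ => n * Real.cos (n * θ)) ?_ ?_ ?_ ?_
          (fun θ => Real.abs_sin_le_one _) (by linarith)
        · intro θ
          convert! ((hasDerivAt_id θ).const_mul (n:ℝ)).sin using 1
          simp; ring
        · intro θ
          convert! (((hasDerivAt_id θ).const_mul (n:ℝ)).cos).const_mul (n:ℝ) using 1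
          simp; ring
        · simpa using Real.sin_nat_mul_two_pi_sub 0 n
        · simp
    have hS := hct_fourier (hct_slice hu'.continuousOn hsI) (hper s) (A := A) (B := B)
      (fun n => rfl) (fun n => rfl) hq0 (by linarith) hdecA hdecB θ
    have hS2 := (hasSum_nat_add_iff' (k + 1)).2 hS
    have hgeo := ((hasSum_geometric_of_lt_one hq0 (by linarith : q < 1)).mul_left
      (16 * ε * q ^ (k + 1)))
    have hfin := hS2.norm_le_of_bounded hgeo (fun n => by
      have := hTb (n + (k + 1)) (4 * ε * q ^ (n + (k + 1)))
        (by linarith [hdecA (n + (k + 1))]) (by linarith [hdecB (n + (k + 1))])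
      rw [Real.norm_eq_abs]
      refine this.trans (le_of_eq ?_)
      rw [pow_add]; ring)
    have hrange : ∑ n ∈ Finset.range (k + 1), T n = (1 / Real.pi) * A 0 +
        ∑ n ∈ Finset.Icc 1 k, T n := by
      rw [Finset.sum_range_succ', add_comm, ← Finset.Ico_add_one_right_eq_Icc,
        Finset.sum_Ico_eq_sum_range]
      congr 1
      · simp [hT]
      · simp [add_comm]
    change ‖_ - ∑ n ∈ Finset.range (k + 1), T n‖ ≤ _ at hfin
    have heq : u (s, θ) - ((1 / (2 * Real.pi)) * A 0 + ∑ n ∈ Finset.Icc 1 k, T n) =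
        u (s, θ) + 1 / (2 * Real.pi) * A 0 - ∑ n ∈ Finset.range (k + 1), T n := by
      rw [hrange]; field_simp; ring
    rw [heq, ← Real.norm_eq_abs]
    refine hfin.trans ?_
    have hinv : (1 - q)⁻¹ ≤ 3 := by
      rw [inv_le_comm₀ (by linarith) (by norm_num)]; linarith
    have hqe : q ^ (k + 1) ≤ Real.exp (((k:ℝ) + 1) * (1 - (M - |s|))) := by
      rw [hqn]
      apply Real.exp_le_exp.2
      push_cast
      have : (0:ℝ) ≤ k := by positivity
      nlinarith
    have hinv0 : 0 ≤ (1 - q)⁻¹ := inv_nonneg.2 (by linarith)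
    calc _ ≤ 16 * ε * Real.exp (((k:ℝ) + 1) * (1 - (M - |s|))) * 3 := by gcongr
      _ = 48 * ε * Real.exp (((k:ℝ) + 1) * (1 - (M - |s|))) := by ring
      _ ≤ _ := by
        gcongr
        have : (0:ℝ) ≤ k := by positivity
        linarith
end

section
/- For every C₁ > 0 there exist constants λ₀ > 0 and C₂ > 0 (depending only on C₁) such that: for every λ ∈ (0, λ₀) and every nonnegative twice continuously differentiable function w defined on the annulus A₁ = {x ∈ ℝ² : 8λ ≤ |x| ≤ 1/8} satisfying Δw(x) ≥ −C₁ (1 + λ/|x|²)² w(x) for all x ∈ A₁ (where Δ is the Euclidean Laplacian on ℝ²), one has sup_{x ∈ A₂} w(x) ≤ C₂ ∫_{A₁} w(x) (1 + λ/|x|²)² dx, where A₂ = {x ∈ ℝ² : 16λ ≤ |x| ≤ 1/16}. -/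
/-- The Euclidean norm of a point of the plane `ℝ × ℝ`. -/
noncomputable def euclNorm (x : ℝ × ℝ) : ℝ := Real.sqrt (x.1 ^ 2 + x.2 ^ 2)

/-- The closed annulus `{x ∈ ℝ² : r ≤ |x| ≤ R}` in the plane. -/
def annulus (r R : ℝ) : Set (ℝ × ℝ) := {x | r ≤ euclNorm x ∧ euclNorm x ≤ R}


open Complex in
/-- The Laplacian on the plane `ℂ`. -/
noncomputable def catLap (f : ℂ → ℝ) (z : ℂ) : ℝ :=
  iteratedFDeriv ℝ 2 f z ![1, 1] + iteratedFDeriv ℝ 2 f z ![I, I]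

lemma cat_line_deriv {E : Type*} [NormedAddCommGroup E] [NormedSpace ℝ E]
    {f : E → ℝ} {z : E} (e : E) (hf : ContDiffAt ℝ 2 f z) :
    deriv (fun s : ℝ => f (z + s • e)) 0 = fderiv ℝ f z e ∧
    deriv (deriv (fun s : ℝ => f (z + s • e))) 0 = iteratedFDeriv ℝ 2 f z ![e, e] := by
  have hline : ∀ s : ℝ, HasDerivAt (fun s : ℝ => z + s • e) e s := by
    intro s
    simpa using ((hasDerivAt_id s).smul_const e).const_add z
  have hev : ∀ᶠ y in nhds z, DifferentiableAt ℝ f y := by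
    filter_upwards [hf.eventually (by simp)] with y hy
    exact hy.differentiableAt (by simp)
  have hcont : Filter.Tendsto (fun s : ℝ => z + s • e) (nhds 0) (nhds z) := by
    have := (hline 0).continuousAt
    simpa [ContinuousAt] using this
  have hd : ∀ᶠ s in nhds (0 : ℝ), deriv (fun s : ℝ => f (z + s • e)) s
      = fderiv ℝ f (z + s • e) e := by
    filter_upwards [hcont.eventually hev] with s hs
    exact (hs.hasFDerivAt.comp_hasDerivAt s (hline s)).deriv
  refine ⟨by simpa using hd.self_of_nhds, ?_⟩
  rw [Filter.EventuallyEq.deriv_eq hd, iteratedFDeriv_two_apply]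
  have h2 : DifferentiableAt ℝ (fderiv ℝ f) z :=
    (hf.fderiv_right (m := 1) (by norm_num)).differentiableAt (by simp)
  have h2' : HasFDerivAt (fderiv ℝ f) (fderiv ℝ (fderiv ℝ f) z) (z + (0 : ℝ) • e) := by
    simpa using h2.hasFDerivAt
  have h3 : HasDerivAt (fun s : ℝ => fderiv ℝ f (z + s • e)) (fderiv ℝ (fderiv ℝ f) z e) 0 :=
    h2'.comp_hasDerivAt (0 : ℝ) (hline 0)
  have h4 : HasDerivAt (fun s : ℝ => fderiv ℝ f (z + s • e) e)
      (fderiv ℝ (fderiv ℝ f) z e e) 0 :=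
    ((ContinuousLinearMap.apply ℝ ℝ e).hasFDerivAt.comp_hasDerivAt (0 : ℝ) h3)
  simpa using h4.deriv

lemma cat_deriv_shift (g : ℝ → ℝ) (x : ℝ) :
    deriv (deriv (fun s => g (x + s))) 0 = deriv (fun s => deriv g s) x := by
  have h : deriv (fun s => g (x + s)) = fun s => deriv g (x + s) :=
    funext fun s => deriv_comp_const_add g x s
  rw [h, deriv_comp_const_add (deriv g) x 0]
  simp

lemma cat_localMax {f : ℂ → ℝ} {z : ℂ} (e : ℂ) (hf : ContDiffAt ℝ 2 f z) (hm : IsLocalMax f z) :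
    iteratedFDeriv ℝ 2 f z ![e, e] ≤ 0 := by
  obtain ⟨h1, h2⟩ := cat_line_deriv e hf
  rw [← h2]
  by_contra! hpos
  have hcont : Continuous (fun s : ℝ => z + s • e) := by fun_prop
  have ht : Filter.Tendsto (fun s : ℝ => z + s • e) (nhds 0) (nhds z) := by
    simpa using hcont.tendsto 0
  have hmax : ∀ᶠ s in nhds (0 : ℝ), f (z + s • e) ≤ f z := ht.eventually hm
  have hca : ContinuousAt (fun s : ℝ => f (z + s • e)) 0 := by
    have : ContinuousAt f (z + (0 : ℝ) • e) := by simpa using hf.continuousAt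
    exact ContinuousAt.comp (f := fun s : ℝ => z + s • e) this hcont.continuousAt
  have hd0 : deriv (fun s : ℝ => f (z + s • e)) 0 = 0 := by
    rw [h1, hm.fderiv_eq_zero]; simp
  have hmin := isLocalMin_of_deriv_deriv_pos hpos hd0 hca
  have heq : (fun s : ℝ => f (z + s • e)) =ᶠ[nhds 0] fun _ => f z := by
    filter_upwards [hmax, hmin] with s a b
    simp only [zero_smul, add_zero] at b
    exact le_antisymm a b
  have := heq.deriv.deriv_eq
  rw [this] at hpos
  simp at hpos

lemma cat_max_principle {K : Set ℂ} (hK : IsCompact K) {f h V : ℂ → ℝ} {M : ℝ} (hM : 0 ≤ M)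
    (hf : ContinuousOn f K) (hh : ContinuousOn h K) (hpos : ∀ z ∈ K, 0 < h z)
    (hf2 : ∀ z ∈ interior K, ContDiffAt ℝ 2 f z) (hh2 : ∀ z ∈ interior K, ContDiffAt ℝ 2 h z)
    (hfL : ∀ z ∈ interior K, -V z * f z ≤ catLap f z)
    (hhL : ∀ z ∈ interior K, catLap h z < -V z * h z)
    (hb : ∀ z ∈ frontier K, f z ≤ M * h z) : ∀ z ∈ K, f z ≤ M * h z := by
  intro z0 hz0
  obtain ⟨z, hz, hzmax⟩ := hK.exists_isMaxOn ⟨z0, hz0⟩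
    (hf.div hh (fun x hx => (hpos x hx).ne'))
  have hle : ∀ y ∈ K, f y / h y ≤ f z / h z := fun y hy => hzmax hy
  by_cases hm : f z / h z ≤ M
  · have := (hle z0 hz0).trans hm
    rwa [div_le_iff₀ (hpos z0 hz0)] at this
  push Not at hm
  exfalso
  set m := f z / h z with hmdef
  have hfz : f z = m * h z := by
    rw [hmdef, div_mul_cancel₀ _ (hpos z hz).ne']
  have hzi : z ∈ interior K := by
    by_contra hni
    have : z ∈ frontier K := ⟨subset_closure hz, hni⟩
    have := hb z this
    rw [hfz] at this
    have := le_of_mul_le_mul_right this (hpos z hz)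
    linarith
  have hloc : IsLocalMax (f - m • h) z := by
    filter_upwards [mem_interior_iff_mem_nhds.1 hzi] with y hy
    have := hle y hy
    rw [div_le_iff₀ (hpos y hy)] at this
    simp only [Pi.sub_apply, Pi.smul_apply, smul_eq_mul]
    linarith
  have hmh : ContDiffAt ℝ 2 (m • h) z := contDiffAt_const.smul (hh2 z hzi)
  have hc : ContDiffAt ℝ 2 (f - m • h) z := (hf2 z hzi).sub hmh
  have e1 := cat_localMax 1 hc hloc
  have e2 := cat_localMax Complex.I hc hloc
  rw [iteratedFDeriv_sub_apply (hf2 z hzi) hmh,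
    iteratedFDeriv_const_smul_apply (hh2 z hzi)] at e1 e2
  have a1 := hfL z hzi
  have a2 := mul_lt_mul_of_pos_left (hhL z hzi) (lt_of_le_of_lt hM hm)
  rw [hfz] at a1
  simp only [catLap] at a1 a2
  simp at e1 e2
  nlinarith

lemma cat_comp_affine {f : ℂ → ℝ} {p ζ z : ℂ} (hζ : ‖ζ‖ = 1)
    (hf : ContDiffAt ℝ 2 f (p + ζ * z)) :
    ContDiffAt ℝ 2 (fun x => f (p + ζ * x)) z ∧
    catLap (fun x => f (p + ζ * x)) z = catLap f (p + ζ * z) := by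
  have hmul : ContDiff ℝ 2 (fun x : ℂ => ζ * x) :=
    (ContinuousLinearMap.mul ℝ ℂ ζ).contDiff
  have hc : ContDiffAt ℝ 2 (fun x => f (p + ζ * x)) z :=
    ContDiffAt.comp z hf (contDiffAt_const.add hmul.contDiffAt)
  refine ⟨hc, ?_⟩
  have key : ∀ e : ℂ, iteratedFDeriv ℝ 2 (fun x => f (p + ζ * x)) z ![e, e]
      = iteratedFDeriv ℝ 2 f (p + ζ * z) ![ζ * e, ζ * e] := by
    intro e
    rw [← (cat_line_deriv e hc).2, ← (cat_line_deriv (ζ * e) hf).2]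
    congr 2
    funext s
    congr 1
    simp only [Complex.real_smul]
    ring
  simp only [catLap, key, iteratedFDeriv_two_apply]
  simp only [Matrix.cons_val_zero, Matrix.cons_val_one]
  have h1 : ζ * 1 = ζ.re • (1 : ℂ) + ζ.im • Complex.I := by
    simp [Complex.re_add_im]
  have h2 : ζ * Complex.I = (-ζ.im) • (1 : ℂ) + ζ.re • Complex.I := by
    apply Complex.ext <;> simp
  have h3 : ζ.re ^ 2 + ζ.im ^ 2 = 1 := by
    have := Complex.sq_norm ζ
    rw [hζ, Complex.normSq_apply] at this
    nlinarith
  rw [h1, h2]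
  simp only [map_add, map_smul, add_apply, smul_apply,
    smul_eq_mul]
  set B := fderiv ℝ (fderiv ℝ f) (p + ζ * z)
  linear_combination (B 1 1 + B Complex.I Complex.I) * h3

lemma cat_lap_eq {f : ℂ → ℝ} {z : ℂ} (hf : ContDiffAt ℝ 2 f z) :
    catLap f z = deriv (fun s => deriv (fun t : ℝ => f (⟨t, z.im⟩ : ℂ)) s) z.re
      + deriv (fun s => deriv (fun t : ℝ => f (⟨z.re, t⟩ : ℂ)) s) z.im := by
  unfold catLap
  rw [← (cat_line_deriv 1 hf).2, ← (cat_line_deriv Complex.I hf).2]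
  congr 1
  · have : (fun s : ℝ => f (z + s • (1 : ℂ))) =
        fun s => (fun t : ℝ => f (⟨t, z.im⟩ : ℂ)) (z.re + s) := by
      funext s
      congr 1
      apply Complex.ext <;> simp
    rw [this]
    exact cat_deriv_shift (fun t : ℝ => f (⟨t, z.im⟩ : ℂ)) z.re
  · have : (fun s : ℝ => f (z + s • Complex.I)) =
        fun s => (fun t : ℝ => f (⟨z.re, t⟩ : ℂ)) (z.im + s) := by
      funext s
      congr 1
      apply Complex.ext <;> simp
    rw [this]
    exact cat_deriv_shift (fun t : ℝ => f (⟨z.re, t⟩ : ℂ)) z.im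

lemma cat_deriv2 (a k c t : ℝ) (ht : t ^ 2 + k ≠ 0) :
    deriv (fun s => deriv (fun t : ℝ => 1 - a * ((t ^ 2 + k) + c / (t ^ 2 + k))) s) t
      = - a * (2 - 2 * c / (t ^ 2 + k) ^ 2 + 8 * c * t ^ 2 / (t ^ 2 + k) ^ 3) := by
  have hev : ∀ᶠ s in nhds t, s ^ 2 + k ≠ 0 := by
    have : ContinuousAt (fun s : ℝ => s ^ 2 + k) t := by fun_prop
    exact this.eventually_ne ht
  have hp : ∀ s : ℝ, HasDerivAt (fun s : ℝ => s ^ 2 + k) (2 * s) s := by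
    intro s
    simpa using (hasDerivAt_pow 2 s).add_const k
  have h1 : (fun s => deriv (fun t : ℝ => 1 - a * ((t ^ 2 + k) + c / (t ^ 2 + k))) s)
      =ᶠ[nhds t] fun s => - a * (2 * s - c * (2 * s) / (s ^ 2 + k) ^ 2) := by
    filter_upwards [hev] with s hs
    have := ((((hp s).add ((hasDerivAt_const s c).div (hp s) hs)).const_mul a).const_sub 1).deriv
    refine Eq.trans this ?_
    ring
  rw [h1.deriv_eq]
  have h2 : HasDerivAt (fun s : ℝ => 2 * s) 2 t := by
    simpa using (hasDerivAt_id t).const_mul 2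
  have h3 := ((h2.sub ((h2.const_mul c).div ((hp t).pow 2) (pow_ne_zero 2 ht))).const_mul (-a)).deriv
  refine Eq.trans h3 ?_
  field_simp
  simp
  ring

lemma cat_barrier (a c : ℝ) {z : ℂ} (hz : z ≠ 0 ∨ c = 0) :
    ContDiffAt ℝ 2 (fun z : ℂ => 1 - a * (‖z‖ ^ 2 + c / ‖z‖ ^ 2)) z ∧
    catLap (fun z : ℂ => 1 - a * (‖z‖ ^ 2 + c / ‖z‖ ^ 2)) z = -4 * a * (1 + c / ‖z‖ ^ 4) := by
  have hn : ContDiffAt ℝ 2 (fun z : ℂ => ‖z‖ ^ 2) z := (contDiff_norm_sq ℝ).contDiffAt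
  rcases eq_or_ne z 0 with rfl | h0
  · obtain rfl : c = 0 := by simpa using hz
    have hc : ContDiffAt ℝ 2 (fun z : ℂ => 1 - a * (‖z‖ ^ 2 + 0 / ‖z‖ ^ 2)) 0 := by
      simp only [zero_div, add_zero]
      exact contDiffAt_const.sub (contDiffAt_const.mul hn)
    refine ⟨hc, ?_⟩
    rw [cat_lap_eq hc]
    simp only [Complex.sq_norm, Complex.normSq_mk]
    have h1 : ∀ t : ℝ, deriv (fun t : ℝ => a * (t * t)) t = 2 * a * t := by
      intro t
      have := (((hasDerivAt_id t).mul (hasDerivAt_id t)).const_mul a).deriv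
      refine Eq.trans this ?_
      simp; ring
    have h2 : deriv (fun t : ℝ => 2 * a * t) 0 = 2 * a := by
      simp
    simp [h1]
    ring
  have hne : ‖z‖ ^ 2 ≠ 0 := by simpa using h0
  have hc : ContDiffAt ℝ 2 (fun z : ℂ => 1 - a * (‖z‖ ^ 2 + c / ‖z‖ ^ 2)) z :=
    contDiffAt_const.sub (contDiffAt_const.mul (hn.add (contDiffAt_const.div hn hne)))
  refine ⟨hc, ?_⟩
  rw [cat_lap_eq hc]
  have hr : ‖z‖ ^ 2 = z.re ^ 2 + z.im ^ 2 := by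
    rw [Complex.sq_norm, Complex.normSq_apply]; ring
  have e1 : ∀ t : ℝ, ‖(⟨t, z.im⟩ : ℂ)‖ ^ 2 = t ^ 2 + z.im ^ 2 := by
    intro t; rw [Complex.sq_norm, Complex.normSq_mk]; ring
  have e2 : ∀ t : ℝ, ‖(⟨z.re, t⟩ : ℂ)‖ ^ 2 = t ^ 2 + z.re ^ 2 := by
    intro t; rw [Complex.sq_norm, Complex.normSq_mk]; ring
  simp only [e1, e2]
  rw [hr] at hne
  rw [cat_deriv2 _ _ _ _ hne, cat_deriv2 _ _ _ _ (by rwa [add_comm]),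
    show ‖z‖ ^ 4 = (‖z‖ ^ 2) ^ 2 by ring, hr, add_comm (z.im ^ 2)]
  field_simp
  ring

lemma cat_near_rot (N : ℕ) [NeZero N] (x y : ℂ) (hxy : ‖x‖ = ‖y‖) :
    ∃ ζ : rootsOfUnity N ℂ, ‖((ζ : ℂˣ) : ℂ) * x - y‖ ≤ 2 * Real.pi / N * ‖x‖ := by
  have hN : (N : ℝ) ≠ 0 := by exact_mod_cast NeZero.ne N
  have hNpos : (0 : ℝ) < N := by exact_mod_cast NeZero.pos N
  have hNC : (N : ℂ) ≠ 0 := by exact_mod_cast NeZero.ne N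
  rcases eq_or_ne x 0 with rfl | hx
  · have : y = 0 := by simpa using hxy.symm
    exact ⟨1, by simp [this]⟩
  set β := (y / x).arg with hβ
  have hy : y = Complex.exp (β * Complex.I) * x := by
    have h1 : ‖y / x‖ = 1 := by
      rw [norm_div, hxy, div_self]
      rw [← hxy]; simpa using hx
    have h2 := Complex.norm_mul_exp_arg_mul_I (y / x)
    rw [h1] at h2
    rw [hβ]
    have h3 : Complex.exp (((y / x).arg : ℝ) * Complex.I) = y / x := by simpa using h2
    rw [h3, div_mul_cancel₀ _ hx]
  set k := ⌊β * N / (2 * Real.pi)⌋ with hk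
  set α : ℝ := 2 * Real.pi * k / N with hα
  have hroot : Complex.exp (α * Complex.I) ^ N = 1 := by
    rw [← Complex.exp_nat_mul, Complex.exp_eq_one_iff]
    refine ⟨k, ?_⟩
    rw [hα]
    push_cast
    field_simp
  refine ⟨rootsOfUnity.mkOfPowEq _ hroot, ?_⟩
  rw [rootsOfUnity.coe_mkOfPowEq, hy, ← sub_mul, norm_mul]
  refine mul_le_mul_of_nonneg_right ?_ (norm_nonneg _)
  have hfac : Complex.exp (α * Complex.I) - Complex.exp (β * Complex.I)
      = Complex.exp (β * Complex.I) * (Complex.exp (Complex.I * ((α - β : ℝ) : ℂ)) - 1) := by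
    rw [mul_sub, ← Complex.exp_add, mul_one]
    congr 2
    push_cast
    ring
  rw [hfac, norm_mul, Complex.norm_exp_ofReal_mul_I, one_mul]
  refine Real.norm_exp_I_mul_ofReal_sub_one_le.trans ?_
  rw [Real.norm_eq_abs, abs_le]
  have hpi := Real.pi_pos
  have f1 := Int.floor_le (β * N / (2 * Real.pi))
  have f2 := Int.lt_floor_add_one (β * N / (2 * Real.pi))
  rw [← hk] at f1 f2
  rw [le_div_iff₀ (by positivity)] at f1
  rw [div_lt_iff₀ (by positivity)] at f2
  have e : α - β = (2 * Real.pi * k - β * N) / N := by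
    rw [hα]; field_simp
  rw [e, ← neg_div]
  constructor
  · apply div_le_div_of_nonneg_right _ hNpos.le
    nlinarith
  · apply div_le_div_of_nonneg_right _ hNpos.le
    nlinarith

open MeasureTheory Metric in
lemma cat_integral_rot (f : ℂ → ℝ) (p ζ : ℂ) (hζ : ‖ζ‖ = 1) (R : ℝ) :
    ∫ x in closedBall (0 : ℂ) R, f (p + ζ * x) = ∫ z in closedBall p R, f z := by
  let c : Circle := ⟨ζ, by simpa [Submonoid.unitSphere] using hζ⟩
  have h1 : MeasurePreserving (rotation c) volume volume := (rotation c).measurePreserving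
  have h2 : MeasurePreserving (fun z : ℂ => p + z) volume volume :=
    measurePreserving_add_left volume p
  have h3 := h2.comp h1
  have he : MeasurableEmbedding ((fun z : ℂ => p + z) ∘ rotation c) :=
    (measurableEmbedding_addLeft p).comp (rotation c).toHomeomorph.measurableEmbedding
  have hr : ∀ x, rotation c x = ζ * x := fun x => rfl
  have h4 := h3.setIntegral_preimage_emb he f (closedBall p R)
  have hs : ((fun z : ℂ => p + z) ∘ rotation c) ⁻¹' (closedBall p R) = closedBall 0 R := by
    ext x
    simp [hr, hζ]
  rw [hs] at h4
  exact h4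

open MeasureTheory Metric in
lemma cat_mean_value {f : ℂ → ℝ} {p : ℂ} {R K : ℝ} (hR : 0 < R) (hK : 0 < K) (hKR : K * R ^ 2 ≤ 1)
    (hf2 : ∀ z ∈ closedBall p R, ContDiffAt ℝ 2 f z)
    (hf0 : ∀ z ∈ closedBall p R, 0 ≤ f z)
    (hL : ∀ z ∈ closedBall p R, -K * f z ≤ catLap f z) :
    f p * (Real.pi * R ^ 2) ≤ 2 * ∫ z in closedBall p R, f z := by
  have hfc : ContinuousOn f (closedBall p R) := fun z hz => (hf2 z hz).continuousAt.continuousWithinAt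
  have huc := (isCompact_closedBall p R).uniformContinuousOn_of_continuous hfc
  have hvol : volume.real (closedBall (0 : ℂ) R) = Real.pi * R ^ 2 := by
    simp [Measure.real, Complex.volume_closedBall, hR.le, mul_comm]
  have hpi := Real.pi_pos
  -- it is enough to prove the estimate up to an error
  suffices H : ∀ η > 0, f p * (Real.pi * R ^ 2) ≤
      2 * (∫ z in closedBall p R, f z) + 2 * (Real.pi * R ^ 2) * η by
    refine le_of_forall_pos_le_add fun ε hε => ?_
    have := H (ε / (2 * (Real.pi * R ^ 2))) (by positivity)
    rwa [mul_div_cancel₀ _ (by positivity)] at this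
  intro η hη
  obtain ⟨ε, hε, huc⟩ := Metric.uniformContinuousOn_iff.1 huc η hη
  obtain ⟨n, hn⟩ := exists_nat_gt (2 * Real.pi * R / ε)
  have hn0 : (0 : ℝ) < n := lt_of_le_of_lt (by positivity) hn
  have : NeZero n := ⟨by rintro rfl; simp at hn0⟩
  let _ : Fintype (rootsOfUnity n ℂ) := Fintype.ofFinite _
  have hnorm : ∀ ζ : rootsOfUnity n ℂ, ‖((ζ : ℂˣ) : ℂ)‖ = 1 := fun ζ =>
    Complex.norm_eq_one_of_mem_rootsOfUnity ζ.2
  set S : ℝ := (Fintype.card (rootsOfUnity n ℂ) : ℝ) with hS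
  have hSpos : 0 < S := by
    rw [hS]; exact_mod_cast Fintype.card_pos
  set W : ℂ → ℝ := ∑ ζ : rootsOfUnity n ℂ, fun x => f (p + ((ζ : ℂˣ) : ℂ) * x) with hW
  have hWap : ∀ x, W x = ∑ ζ : rootsOfUnity n ℂ, f (p + ((ζ : ℂˣ) : ℂ) * x) := by
    intro x; rw [hW, Finset.sum_apply]
  have hmem : ∀ (ζ : rootsOfUnity n ℂ) (x : ℂ), ‖x‖ ≤ R →
      p + ((ζ : ℂˣ) : ℂ) * x ∈ closedBall p R := by
    intro ζ x hx
    simpa [hnorm ζ] using hx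
  have hW0 : W 0 = S * f p := by
    rw [hWap]; simp [hS]
  have hWnn : ∀ x, ‖x‖ ≤ R → 0 ≤ W x := by
    intro x hx
    rw [hWap]
    exact Finset.sum_nonneg fun ζ _ => hf0 _ (hmem ζ x hx)
  have hterm : ∀ x, ‖x‖ ≤ R → ∀ ζ : rootsOfUnity n ℂ,
      ContDiffAt ℝ 2 (fun x => f (p + ((ζ : ℂˣ) : ℂ) * x)) x := fun x hx ζ =>
    (cat_comp_affine (hnorm ζ) (hf2 _ (hmem ζ x hx))).1
  have hW2 : ∀ x, ‖x‖ ≤ R → ContDiffAt ℝ 2 W x := by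
    intro x hx
    have : W = fun x => ∑ ζ : rootsOfUnity n ℂ, f (p + ((ζ : ℂˣ) : ℂ) * x) := funext hWap
    rw [this]
    exact ContDiffAt.sum fun ζ _ => hterm x hx ζ
  have hWL : ∀ x, ‖x‖ ≤ R → -K * W x ≤ catLap W x := by
    intro x hx
    have e : catLap W x = ∑ ζ : rootsOfUnity n ℂ, catLap f (p + ((ζ : ℂˣ) : ℂ) * x) := by
      unfold catLap
      rw [hW, iteratedFDeriv_sum_apply (fun ζ _ => hterm x hx ζ)]
      rw [sum_apply, sum_apply,
        ← Finset.sum_add_distrib]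
      refine Finset.sum_congr rfl fun ζ _ => ?_
      exact (cat_comp_affine (hnorm ζ) (hf2 _ (hmem ζ x hx))).2
    rw [e, hWap, Finset.mul_sum]
    exact Finset.sum_le_sum fun ζ _ => hL _ (hmem ζ x hx)
  have hWinv : ∀ (ζ₀ : rootsOfUnity n ℂ) (x : ℂ), W (((ζ₀ : ℂˣ) : ℂ) * x) = W x := by
    intro ζ₀ x
    rw [hWap, hWap]
    refine Fintype.sum_equiv (Equiv.mulRight ζ₀) _ _ fun ζ => ?_
    simp [mul_assoc]
  have hWrad : ∀ x y, ‖x‖ ≤ R → ‖x‖ = ‖y‖ → W y ≤ W x + S * η := by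
    intro x y hx hxy
    obtain ⟨ζ₀, h0⟩ := cat_near_rot n x y hxy
    rw [← hWinv ζ₀ x, hWap, hWap]
    have hlt : ‖((ζ₀ : ℂˣ) : ℂ) * x - y‖ < ε := by
      refine h0.trans_lt ?_
      rw [div_lt_iff₀ hε] at hn
      rw [div_mul_eq_mul_div, div_lt_iff₀ hn0]
      nlinarith
    have : S * η = ∑ ζ : rootsOfUnity n ℂ, η := by simp [hS]
    rw [this, ← Finset.sum_add_distrib]
    refine Finset.sum_le_sum fun ζ _ => ?_
    have hx' : ‖((ζ₀ : ℂˣ) : ℂ) * x‖ ≤ R := by simpa [hnorm] using hx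
    have := huc _ (hmem ζ y (hxy ▸ hx)) _ (hmem ζ _ hx') (by
      rw [dist_add_left, dist_comm, dist_eq_norm, ← mul_sub, norm_mul, hnorm, one_mul]
      exact hlt)
    rw [Real.dist_eq, abs_lt] at this
    linarith
  have hmain : ∀ x ∈ closedBall (0 : ℂ) R, S * f p ≤ 2 * W x + 2 * (S * η) := by
    intro x hx
    have hx : ‖x‖ ≤ R := by simpa using hx
    set h : ℂ → ℝ := fun z => 1 - K / 2 * (‖z‖ ^ 2 + 0 / ‖z‖ ^ 2) with hh
    have hb : ∀ z : ℂ, ‖z‖ ≤ R → 1 / 2 ≤ h z := by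
      intro z hz
      have : ‖z‖ ^ 2 ≤ R ^ 2 := by gcongr
      simp only [hh, zero_div, add_zero]
      nlinarith
    have hM : 0 ≤ 2 * (W x + S * η) := by
      have := hWnn x hx
      positivity
    have hin : ∀ z ∈ closedBall (0 : ℂ) ‖x‖, ‖z‖ ≤ R := by
      intro z hz
      exact (by simpa using hz : ‖z‖ ≤ ‖x‖).trans hx
    have := cat_max_principle (K := closedBall (0 : ℂ) ‖x‖) (isCompact_closedBall _ _)
      (f := W) (h := h) (V := fun _ => K) hM
      (fun z hz => (hW2 z (hin z hz)).continuousAt.continuousWithinAt)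
      (fun z hz => (cat_barrier (K / 2) 0 (Or.inr rfl)).1.continuousAt.continuousWithinAt)
      (fun z hz => by linarith [hb z (hin z hz)])
      (fun z hz => hW2 z (hin z (interior_subset hz)))
      (fun z hz => (cat_barrier (K / 2) 0 (Or.inr rfl)).1)
      (fun z hz => hWL z (hin z (interior_subset hz)))
      (fun z hz => by
        rw [(cat_barrier (K / 2) 0 (Or.inr rfl)).2]
        have : 0 ≤ ‖z‖ ^ 2 := by positivity
        simp only [hh, zero_div, add_zero]
        nlinarith [mul_nonneg (mul_nonneg hK.le hK.le) this])
      (fun z hz => by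
        have hz' : ‖z‖ = ‖x‖ := by simpa using frontier_closedBall_subset_sphere hz
        have h1 := hWrad x z hx hz'.symm
        have h2 := hb z (hz'.le.trans hx)
        nlinarith)
      0 (by simp)
    rw [hW0] at this
    simp only [hh] at this
    simp at this
    linarith
  -- integrate
  have h_intg : ∀ ζ : rootsOfUnity n ℂ,
      IntegrableOn (fun x => f (p + ((ζ : ℂˣ) : ℂ) * x)) (closedBall (0 : ℂ) R) volume := by
    intro ζ
    apply ContinuousOn.integrableOn_compact (isCompact_closedBall _ _)
    intro x hx
    exact (hterm x (by simpa using hx) ζ).continuousAt.continuousWithinAt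
  have hIW : ∫ x in closedBall (0 : ℂ) R, W x = S * ∫ z in closedBall p R, f z := by
    simp only [hWap]
    rw [integral_finsetSum _ (fun ζ _ => h_intg ζ)]
    simp [cat_integral_rot f p _ (hnorm _) R, hS]
  have hWint : IntegrableOn W (closedBall (0 : ℂ) R) volume := by
    apply ContinuousOn.integrableOn_compact (isCompact_closedBall _ _)
    intro x hx
    exact (hW2 x (by simpa using hx)).continuousAt.continuousWithinAt
  have hfin : volume (closedBall (0 : ℂ) R) ≠ ⊤ := (isCompact_closedBall _ _).measure_lt_top.ne
  have hI := setIntegral_mono_on (μ := volume) (s := closedBall (0 : ℂ) R)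
    (f := fun _ => S * f p) (g := fun x => 2 * W x + 2 * (S * η))
    (integrableOn_const hfin) ((hWint.const_mul 2).add (integrableOn_const hfin))
    measurableSet_closedBall hmain
  have eW : ∫ x in closedBall (0 : ℂ) R, 2 * W x = 2 * (S * ∫ z in closedBall p R, f z) := by
    rw [integral_const_mul, hIW]
  rw [integral_add (hWint.const_mul 2) (integrableOn_const hfin), eW,
    setIntegral_const, setIntegral_const, hvol] at hI
  simp only [smul_eq_mul] at hI
  refine le_of_mul_le_mul_left ?_ hSpos
  nlinarith

open MeasureTheory Metric in
/-- The estimate near the two ends of the neck. -/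
lemma cat_ends {C₁ lam δ : ℝ} (hC₁ : 0 < C₁) (hlam : 0 < lam) (hδ : 0 < δ) (hδ1 : δ ≤ 1 / 16)
    (hδC : C₁ * δ ^ 2 ≤ 1 / 16) {v : ℂ → ℝ}
    (hc : ContinuousOn v {z : ℂ | 8 * lam ≤ ‖z‖ ∧ ‖z‖ ≤ 1 / 8})
    (hcA : IsCompact {z : ℂ | 8 * lam ≤ ‖z‖ ∧ ‖z‖ ≤ 1 / 8})
    (h2 : ∀ z : ℂ, 8 * lam < ‖z‖ → ‖z‖ < 1 / 8 → ContDiffAt ℝ 2 v z)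
    (h0 : ∀ z : ℂ, 8 * lam ≤ ‖z‖ → ‖z‖ ≤ 1 / 8 → 0 ≤ v z)
    (hL : ∀ z : ℂ, 8 * lam < ‖z‖ → ‖z‖ < 1 / 8 →
      -(C₁ * (1 + lam / ‖z‖ ^ 2) ^ 2) * v z ≤ catLap v z)
    {p : ℂ} (hp1 : 16 * lam ≤ ‖p‖) (hp2 : ‖p‖ ≤ 1 / 16) (hp : δ ≤ ‖p‖ ∨ ‖p‖ * δ ≤ lam) :
    v p ≤ 12 / (Real.pi * δ ^ 4) *
      ∫ z in {z : ℂ | 8 * lam ≤ ‖z‖ ∧ ‖z‖ ≤ 1 / 8}, v z * (1 + lam / ‖z‖ ^ 2) ^ 2 := by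
  set A : Set ℂ := {z : ℂ | 8 * lam ≤ ‖z‖ ∧ ‖z‖ ≤ 1 / 8} with hA
  set r := ‖p‖ with hr
  have hr0 : 0 < r := by linarith
  have hpi := Real.pi_pos
  set R := δ * r with hR
  have hR0 : 0 < R := by positivity
  have hRr : R ≤ r / 16 := by rw [hR]; nlinarith
  have hball : ∀ z ∈ closedBall p R, 15 / 16 * r ≤ ‖z‖ ∧ ‖z‖ ≤ 17 / 16 * r := by
    intro z hz
    rw [mem_closedBall, dist_eq_norm] at hz
    have a1 := norm_sub_norm_le z p
    have a2 := norm_sub_norm_le p z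
    rw [norm_sub_rev] at a2
    constructor <;> linarith
  have hin : ∀ z ∈ closedBall p R, 8 * lam < ‖z‖ ∧ ‖z‖ < 1 / 8 := by
    intro z hz
    obtain ⟨a, b⟩ := hball z hz
    constructor <;> linarith
  have hsub : closedBall p R ⊆ A := fun z hz => ⟨(hin z hz).1.le, (hin z hz).2.le⟩
  set K := C₁ * (1 + 4 * lam / r ^ 2) ^ 2 with hK
  have hK0 : 0 < K := by positivity
  have hKR : K * R ^ 2 ≤ 1 := by
    have e : K * R ^ 2 = C₁ * δ ^ 2 * (r + 4 * (lam / r)) ^ 2 := by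
      rw [hK, hR]; field_simp
    have h1 : lam / r ≤ 1 / 16 := by
      rw [div_le_iff₀ hr0]; linarith
    have h1' : 0 < lam / r := by positivity
    have h3 : (r + 4 * (lam / r)) ^ 2 ≤ 1 := by
      apply pow_le_one₀ (by positivity); linarith
    rw [e]
    calc C₁ * δ ^ 2 * (r + 4 * (lam / r)) ^ 2 ≤ 1 / 16 * 1 := by gcongr
      _ ≤ 1 := by norm_num
  have hmv := cat_mean_value (f := v) hR0 hK0 hKR
    (fun z hz => h2 z (hin z hz).1 (hin z hz).2)
    (fun z hz => h0 z (hin z hz).1.le (hin z hz).2.le)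
    (fun z hz => by
      refine le_trans ?_ (hL z (hin z hz).1 (hin z hz).2)
      refine mul_le_mul_of_nonneg_right ?_ (h0 z (hin z hz).1.le (hin z hz).2.le)
      have hz1 := (hball z hz).1
      have hz0 : 0 < ‖z‖ := by linarith
      have h3 : lam / ‖z‖ ^ 2 ≤ 4 * lam / r ^ 2 := by
        rw [div_le_div_iff₀ (by positivity) (by positivity)]
        nlinarith [mul_le_mul hz1 hz1 (by positivity) hz0.le]
      have h4 : (1 + lam / ‖z‖ ^ 2) ^ 2 ≤ (1 + 4 * lam / r ^ 2) ^ 2 := by gcongr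
      rw [hK]
      nlinarith)
  have hQ : ∀ z ∈ closedBall p R, δ ^ 2 ≤ 6 * r ^ 2 * (1 + lam / ‖z‖ ^ 2) ^ 2 := by
    intro z hz
    obtain ⟨hz1, hz2⟩ := hball z hz
    have hz0 : 0 < ‖z‖ := by linarith
    have hq0 : 0 < lam / ‖z‖ ^ 2 := by positivity
    rcases hp with hp | hp
    · have : 1 ≤ (1 + lam / ‖z‖ ^ 2) ^ 2 := by
        apply one_le_pow₀; linarith
      nlinarith [mul_self_nonneg r]
    · have h3 : δ / (2 * r) ≤ lam / ‖z‖ ^ 2 := by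
        rw [div_le_div_iff₀ (by positivity) (by positivity)]
        have : ‖z‖ ^ 2 ≤ 2 * r ^ 2 := by nlinarith
        calc δ * ‖z‖ ^ 2 ≤ δ * (2 * r ^ 2) := by gcongr
          _ = (r * δ) * (2 * r) := by ring
          _ ≤ lam * (2 * r) := by gcongr
      have h4 : (δ / (2 * r)) ^ 2 ≤ (1 + lam / ‖z‖ ^ 2) ^ 2 := by
        gcongr; linarith
      have h5 : 6 * r ^ 2 * (δ / (2 * r)) ^ 2 = 3 / 2 * δ ^ 2 := by
        field_simp; norm_num
      calc δ ^ 2 ≤ 3 / 2 * δ ^ 2 := by nlinarith [sq_nonneg δ]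
        _ = 6 * r ^ 2 * (δ / (2 * r)) ^ 2 := h5.symm
        _ ≤ _ := by gcongr
  have hcQ : ContinuousOn (fun z => v z * (1 + lam / ‖z‖ ^ 2) ^ 2) A := by
    apply hc.mul
    apply ContinuousOn.pow
    apply continuousOn_const.add
    apply continuousOn_const.div (by fun_prop)
    intro z hz
    have : 0 < ‖z‖ := by linarith [hz.1]
    positivity
  have hiQ : IntegrableOn (fun z => v z * (1 + lam / ‖z‖ ^ 2) ^ 2) A :=
    hcQ.integrableOn_compact hcA
  have hI1 : ∫ z in closedBall p R, v z * (1 + lam / ‖z‖ ^ 2) ^ 2 ≤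
      ∫ z in A, v z * (1 + lam / ‖z‖ ^ 2) ^ 2 := by
    apply setIntegral_mono_set hiQ
    · filter_upwards [ae_restrict_mem hcA.measurableSet] with z hz
      exact mul_nonneg (h0 z hz.1 hz.2) (by positivity)
    · exact hsub.eventuallyLE
  have hI2 : ∫ z in closedBall p R, δ ^ 2 * v z ≤
      ∫ z in closedBall p R, 6 * r ^ 2 * (v z * (1 + lam / ‖z‖ ^ 2) ^ 2) := by
    apply setIntegral_mono_on
    · exact (((hc.mono hsub).integrableOn_compact (isCompact_closedBall _ _))).const_mul _
    · exact (hiQ.mono_set hsub).const_mul _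
    · exact measurableSet_closedBall
    · intro z hz
      have := mul_le_mul_of_nonneg_right (hQ z hz) (h0 z (hin z hz).1.le (hin z hz).2.le)
      linarith
  rw [integral_const_mul, integral_const_mul] at hI2
  set I := ∫ z in A, v z * (1 + lam / ‖z‖ ^ 2) ^ 2
  set J := ∫ z in closedBall p R, v z
  rw [div_mul_eq_mul_div, le_div_iff₀ (by positivity)]
  have hfin : (v p * (Real.pi * δ ^ 4)) * r ^ 2 ≤ (12 * I) * r ^ 2 := by
    calc (v p * (Real.pi * δ ^ 4)) * r ^ 2 = δ ^ 2 * (v p * (Real.pi * R ^ 2)) := by rw [hR]; ring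
      _ ≤ δ ^ 2 * (2 * J) := by gcongr
      _ = 2 * (δ ^ 2 * J) := by ring
      _ ≤ 2 * (6 * r ^ 2 * I) := by
        refine mul_le_mul_of_nonneg_left (hI2.trans ?_) (by norm_num)
        gcongr
      _ = _ := by ring
  exact le_of_mul_le_mul_right hfin (by positivity)

open MeasureTheory Metric in
lemma cat_core {C₁ lam δ : ℝ} (hC₁ : 0 < C₁) (hlam : 0 < lam) (hδ : 0 < δ) (hδ1 : δ ≤ 1 / 16)
    (hδC : C₁ * δ ^ 2 ≤ 1 / 16) {v : ℂ → ℝ}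
    (hc : ContinuousOn v {z : ℂ | 8 * lam ≤ ‖z‖ ∧ ‖z‖ ≤ 1 / 8})
    (h2 : ∀ z : ℂ, 8 * lam < ‖z‖ → ‖z‖ < 1 / 8 → ContDiffAt ℝ 2 v z)
    (h0 : ∀ z : ℂ, 8 * lam ≤ ‖z‖ → ‖z‖ ≤ 1 / 8 → 0 ≤ v z)
    (hL : ∀ z : ℂ, 8 * lam < ‖z‖ → ‖z‖ < 1 / 8 →
      -(C₁ * (1 + lam / ‖z‖ ^ 2) ^ 2) * v z ≤ catLap v z)
    {p : ℂ} (hp1 : 16 * lam ≤ ‖p‖) (hp2 : ‖p‖ ≤ 1 / 16) :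
    v p ≤ 24 / (Real.pi * δ ^ 4) *
      ∫ z in {z : ℂ | 8 * lam ≤ ‖z‖ ∧ ‖z‖ ≤ 1 / 8}, v z * (1 + lam / ‖z‖ ^ 2) ^ 2 := by
  have hcomp : ∀ a b : ℝ, IsCompact {z : ℂ | a ≤ ‖z‖ ∧ ‖z‖ ≤ b} := by
    intro a b
    have h : {z : ℂ | a ≤ ‖z‖ ∧ ‖z‖ ≤ b} = closedBall 0 b ∩ {z : ℂ | a ≤ ‖z‖} := by
      ext z
      simp [and_comm]
    rw [h]
    exact (isCompact_closedBall _ _).inter_right (isClosed_le continuous_const continuous_norm)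
  have hends := fun {q : ℂ} (hq1 : 16 * lam ≤ ‖q‖) (hq2 : ‖q‖ ≤ 1 / 16) hq =>
    cat_ends hC₁ hlam hδ hδ1 hδC hc (hcomp _ _) h2 h0 hL (p := q) hq1 hq2 hq
  set I := ∫ z in {z : ℂ | 8 * lam ≤ ‖z‖ ∧ ‖z‖ ≤ 1 / 8}, v z * (1 + lam / ‖z‖ ^ 2) ^ 2
  have hpi := Real.pi_pos
  have hI0 : 0 ≤ I := by
    apply setIntegral_nonneg (hcomp _ _).measurableSet
    intro z hz
    exact mul_nonneg (h0 z hz.1 hz.2) (by positivity)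
  have hE0 : 0 ≤ 12 / (Real.pi * δ ^ 4) * I := by positivity
  have h24 : 24 / (Real.pi * δ ^ 4) * I = 2 * (12 / (Real.pi * δ ^ 4) * I) := by ring
  rw [h24]
  set E := 12 / (Real.pi * δ ^ 4) * I
  by_cases hp : δ ≤ ‖p‖ ∨ ‖p‖ * δ ≤ lam
  · have := hends hp1 hp2 hp
    linarith
  push Not at hp
  obtain ⟨hpa, hpb⟩ := hp
  have hlt : lam / δ < ‖p‖ := by rwa [div_lt_iff₀ hδ]
  have hld : 16 * lam ≤ lam / δ := by
    rw [le_div_iff₀ hδ]; nlinarith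
  set h : ℂ → ℝ := fun z => 1 - C₁ * (‖z‖ ^ 2 + lam ^ 2 / ‖z‖ ^ 2) with hh
  have hpos : ∀ z ∈ {z : ℂ | lam / δ ≤ ‖z‖ ∧ ‖z‖ ≤ δ}, 0 < ‖z‖ := by
    intro z hz
    have := hz.1
    linarith
  have hhb : ∀ z ∈ {z : ℂ | lam / δ ≤ ‖z‖ ∧ ‖z‖ ≤ δ}, 1 / 2 ≤ h z ∧ h z ≤ 1 := by
    intro z hz
    have hz0 := hpos z hz
    have b1 : ‖z‖ ^ 2 ≤ δ ^ 2 := by gcongr; exact hz.2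
    have b2 : lam ^ 2 / ‖z‖ ^ 2 ≤ δ ^ 2 := by
      rw [← div_pow]
      gcongr
      have := hz.1
      rw [div_le_iff₀ hδ] at this
      rw [div_le_iff₀ hz0]; linarith
    have b3 : C₁ * (‖z‖ ^ 2 + lam ^ 2 / ‖z‖ ^ 2) ≤ C₁ * (δ ^ 2 + δ ^ 2) := by gcongr
    have b4 : 0 ≤ C₁ * (‖z‖ ^ 2 + lam ^ 2 / ‖z‖ ^ 2) := by positivity
    simp only [hh]
    constructor <;> linarith
  have hne : ∀ z ∈ {z : ℂ | lam / δ ≤ ‖z‖ ∧ ‖z‖ ≤ δ}, z ≠ 0 := fun z hz =>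
    norm_pos_iff.1 (hpos z hz)
  have hin : ∀ z ∈ {z : ℂ | lam / δ ≤ ‖z‖ ∧ ‖z‖ ≤ δ}, 8 * lam < ‖z‖ ∧ ‖z‖ < 1 / 8 := by
    intro z hz
    have := hz.1
    have := hz.2
    constructor <;> linarith
  have key := cat_max_principle (K := {z : ℂ | lam / δ ≤ ‖z‖ ∧ ‖z‖ ≤ δ}) (hcomp _ _)
    (f := v) (h := h) (V := fun z => C₁ * (1 + lam / ‖z‖ ^ 2) ^ 2) (M := 2 * E) (by positivity)
    (fun z hz => (h2 z (hin z hz).1 (hin z hz).2).continuousAt.continuousWithinAt)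
    (fun z hz => (cat_barrier C₁ (lam ^ 2) (Or.inl (hne z hz))).1.continuousAt.continuousWithinAt)
    (fun z hz => by linarith [(hhb z hz).1])
    (fun z hz => h2 z (hin z (interior_subset hz)).1 (hin z (interior_subset hz)).2)
    (fun z hz => (cat_barrier C₁ (lam ^ 2) (Or.inl (hne z (interior_subset hz)))).1)
    (fun z hz => hL z (hin z (interior_subset hz)).1 (hin z (interior_subset hz)).2)
    (fun z hz => by
      rw [(cat_barrier C₁ (lam ^ 2) (Or.inl (hne z (interior_subset hz)))).2]
      obtain ⟨b1, b2⟩ := hhb z (interior_subset hz)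
      have hz0 := hpos z (interior_subset hz)
      have e : lam ^ 2 / ‖z‖ ^ 4 = (lam / ‖z‖ ^ 2) ^ 2 := by rw [div_pow]; ring
      rw [e]
      set q := lam / ‖z‖ ^ 2
      have c1 : C₁ * (1 + q) ^ 2 * h z ≤ C₁ * (1 + q) ^ 2 * 1 := by gcongr
      have c2 : C₁ * (1 + q) ^ 2 < C₁ * (4 * (1 + q ^ 2)) := by
        apply mul_lt_mul_of_pos_left _ hC₁
        nlinarith [sq_nonneg (1 - q), sq_nonneg q]
      linarith)
    (fun z hz => by
      have hzK : z ∈ {z : ℂ | lam / δ ≤ ‖z‖ ∧ ‖z‖ ≤ δ} := (hcomp _ _).isClosed.frontier_subset hz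
      have hcase : δ ≤ ‖z‖ ∨ ‖z‖ * δ ≤ lam := by
        by_contra! hcon
        obtain ⟨c1, c2⟩ := hcon
        rw [← div_lt_iff₀ hδ] at c2
        apply hz.2
        rw [mem_interior_iff_mem_nhds]
        filter_upwards [continuous_norm.continuousAt.eventually_lt continuousAt_const c1,
          continuousAt_const.eventually_lt continuous_norm.continuousAt c2] with y y1 y2
        exact ⟨y2.le, y1.le⟩
      have := hends (hld.trans hzK.1) (hzK.2.trans hδ1) hcase
      have := (hhb z hzK).1
      nlinarith)
    p ⟨hlt.le, hpa.le⟩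
  have := (hhb p ⟨hlt.le, hpa.le⟩).2
  nlinarith

/-- Mean value inequality on the catenoid neck (Lemma 5.2), uniform in `λ`: for every
`C₁ > 0` there are `λ₀, C₂ > 0` such that for all `λ ∈ (0, λ₀)`, any nonnegative `C²`
function `w` on the annulus `8λ ≤ |x| ≤ 1/8` with `Δw ≥ -C₁ (1 + λ/|x|²)² w` satisfies
`sup_{16λ ≤ |x| ≤ 1/16} w ≤ C₂ ∫_{8λ ≤ |x| ≤ 1/8} w (1 + λ/|x|²)² dx`. -/
theorem catenoid_mean_value_inequality :
    ∀ C₁ : ℝ, 0 < C₁ →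
    ∃ lam₀ C₂ : ℝ, 0 < lam₀ ∧ 0 < C₂ ∧
      ∀ lam : ℝ, 0 < lam → lam < lam₀ →
      ∀ w : ℝ × ℝ → ℝ,
        ContDiffOn ℝ 2 w (annulus (8 * lam) (1 / 8)) →
        (∀ x ∈ annulus (8 * lam) (1 / 8), 0 ≤ w x) →
        (∀ x ∈ annulus (8 * lam) (1 / 8),
          -C₁ * (1 + lam / euclNorm x ^ 2) ^ 2 * w x ≤
            deriv (fun x₁ => deriv (fun y₁ => w (y₁, x.2)) x₁) x.1 +
              deriv (fun x₂ => deriv (fun y₂ => w (x.1, y₂)) x₂) x.2) →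
        ∀ x ∈ annulus (16 * lam) (1 / 16),
          w x ≤ C₂ * ∫ y in annulus (8 * lam) (1 / 8),
            w y * (1 + lam / euclNorm y ^ 2) ^ 2 := by
  intro C₁ hC₁
  set δ : ℝ := 1 / (16 * (1 + C₁)) with hδ
  have hδ0 : 0 < δ := by positivity
  have hδ1 : δ ≤ 1 / 16 := by
    rw [hδ]
    apply one_div_le_one_div_of_le <;> linarith
  have hδC : C₁ * δ ^ 2 ≤ 1 / 16 := by
    have h1 : C₁ * δ ≤ 1 / 16 := by
      rw [hδ, mul_one_div, div_le_div_iff₀ (by positivity) (by norm_num)]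
      linarith
    nlinarith
  have hpi := Real.pi_pos
  refine ⟨1, 24 / (Real.pi * δ ^ 4), one_pos, by positivity, ?_⟩
  intro lam hlam _ w hw hw0 hwL x hx
  have hnorm : ∀ z : ℂ, euclNorm (z.re, z.im) = ‖z‖ := by
    intro z
    rw [euclNorm, Complex.norm_eq_sqrt_sq_add_sq]
  have hcont : Continuous euclNorm := by
    unfold euclNorm
    fun_prop
  have hmem : ∀ z : ℂ, 8 * lam ≤ ‖z‖ → ‖z‖ ≤ 1 / 8 →
      (z.re, z.im) ∈ annulus (8 * lam) (1 / 8) := by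
    intro z h1 h2
    rw [annulus, Set.mem_setOf_eq, hnorm]
    exact ⟨h1, h2⟩
  set v : ℂ → ℝ := fun z => w (z.re, z.im) with hv
  have hre : ContDiff ℝ 2 (fun z : ℂ => (z.re, z.im)) :=
    Complex.reCLM.contDiff.prodMk Complex.imCLM.contDiff
  have h2 : ∀ z : ℂ, 8 * lam < ‖z‖ → ‖z‖ < 1 / 8 → ContDiffAt ℝ 2 v z := by
    intro z h1 h3
    have hn : annulus (8 * lam) (1 / 8) ∈ nhds (z.re, z.im) := by
      rw [← hnorm] at h1 h3
      filter_upwards [hcont.continuousAt.eventually_lt continuousAt_const h3,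
        continuousAt_const.eventually_lt hcont.continuousAt h1] with y y1 y2
      exact ⟨y2.le, y1.le⟩
    exact ContDiffAt.comp z (hw.contDiffAt hn) hre.contDiffAt
  have hc : ContinuousOn v {z : ℂ | 8 * lam ≤ ‖z‖ ∧ ‖z‖ ≤ 1 / 8} :=
    hw.continuousOn.comp hre.continuous.continuousOn (fun z hz => hmem z hz.1 hz.2)
  have hI : ∫ y in annulus (8 * lam) (1 / 8), w y * (1 + lam / euclNorm y ^ 2) ^ 2 =
      ∫ z in {z : ℂ | 8 * lam ≤ ‖z‖ ∧ ‖z‖ ≤ 1 / 8}, v z * (1 + lam / ‖z‖ ^ 2) ^ 2 := by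
    rw [← Complex.volume_preserving_equiv_real_prod.setIntegral_preimage_emb
      Complex.measurableEquivRealProd.measurableEmbedding]
    have hs : Complex.measurableEquivRealProd ⁻¹' annulus (8 * lam) (1 / 8) =
        {z : ℂ | 8 * lam ≤ ‖z‖ ∧ ‖z‖ ≤ 1 / 8} := by
      ext z
      simp [annulus, Complex.measurableEquivRealProd_apply, hnorm]
    rw [hs]
    simp only [Complex.measurableEquivRealProd_apply, hnorm, hv]
  rw [hI]
  have hxn : euclNorm x = ‖(⟨x.1, x.2⟩ : ℂ)‖ := (hnorm ⟨x.1, x.2⟩)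
  have hx' := hx
  rw [annulus, Set.mem_setOf_eq, hxn] at hx'
  exact cat_core (v := v) (p := ⟨x.1, x.2⟩) hC₁ hlam hδ0 hδ1 hδC hc h2
    (fun z h1 h3 => hw0 _ (hmem z h1 h3))
    (fun z h1 h3 => by
      have := hwL _ (hmem z h1.le h3.le)
      rw [hnorm] at this
      rw [cat_lap_eq (h2 z h1 h3)]
      simpa [hv] using this)
    hx'.1 hx'.2
end
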